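/- Let λ := Λ(conv{[[0,-2],[1/2,0]], [[0,-1/2],[2,0]]}), define A₀ = [[0,0],[0,-1]], A₁ = [[-1,1],[-1,-1]], B₀ = [[-λ,-2],[1/2,-λ]], B₁ = [[-λ,-1/2],[2,-λ]] in M₂(ℝ), set X₀ = A₀⊗I + I⊗B₀, X₁ = A₀⊗I + I⊗B₁, X₂ = A₁⊗I in M₄(ℝ), where ⊗ is the Kronecker product and I the 2×2 identity, and let 𝖷 = conv{X₀, X₁, X₂}. Let N be any Barabanov norm for 𝖷. Then for all u₁, u₂, v₁, v₂ ∈ ℝ with |u₂| ≤ |u₁|, one has N((u₁,u₂)ᵀ ⊗ (v₁,v₂)ᵀ) = N((u₁,0)ᵀ ⊗ (v₁,v₂)ᵀ), where ⊗ denotes the Kronecker product of column vectors (so (u₁,u₂)ᵀ ⊗ (v₁,v₂)ᵀ = (u₁v₁, u₁v₂, u₂v₁, u₂v₂)ᵀ ∈ ℝ⁴). Consequently N is not strictly convex: there exist distinct w₁, w₂ ∈ ℝ⁴ with N(w₁) = N(w₂) = N((w₁+w₂)/2) = 1. -/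

import Mathlib

/-!
The generators act on product vectors factor by factor: on `u ⊗ v` the matrices `X₀`, `X₁` act as
the damping `A₀` on `u` and as one of the two elliptic rotations, shifted by `-λ`, on `v`, while
`X₂` acts as `A₁` on `u` and leaves `v` at rest. Hence a trajectory issued from `u ⊗ v` remains a
product `u(t) ⊗ w(t)`, both factors being driven by the same barycentric weights `θ₀, θ₁, θ₂`
(`exists_factors`).

The exponent of the product system is `0` (`lambda_eq_zero`). Since `A₀ e₁ = 0`, an extremal norm
`N` bounds the infinitesimal growth of both shifted rotations in the norm `p w = N (e₁ ⊗ w)` by the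
exponent `r` of the product system. Therefore the planar system has exponent at most `λ + r`, which
gives `r ≥ 0` (`rate_nonneg`). Conversely, if `r > 0`, then on a Barabanov trajectory issued from
`e₁ ⊗ e₁` the second factor grows at the full rate `r`. No growth takes place while `X₂` is active,
so the total weight of `X₂` is finite, and from some time on `w` is a small perturbation of a
trajectory of the shifted planar system, whose exponent is `0` (`rate_nonpos`).

Now let `|u₂| ≤ |u₁|` and follow a Barabanov trajectory from `u ⊗ v`, along which `N` is constant.
The sup norm of the first factor never increases (`damped_norm_le`), nor does `p (w(t))`. The energy
`u₁² + u₂²` decays at rate at least `2 u₂²`, so the second coordinate of the first factor becomes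
arbitrarily small (`damped_exists_small`). At such times `N (u(t) ⊗ w(t))` exceeds
`|u₁| N (e₁ ⊗ v)` by arbitrarily little, which proves `N (u ⊗ v) ≤ |u₁| N (e₁ ⊗ v)`. The reverse
inequality follows by convexity, as `(u₁, 0)` is the midpoint of `(u₁, u₂)` and `(u₁, -u₂)`. In
particular a sphere of `N` contains the segment from `(1, 1) ⊗ e₁` to `(1, -1) ⊗ e₁`, so `N` is not
strictly convex.
-/

open MeasureTheory Filter Matrix Kronecker

/-- The Euclidean norm on `n → ℝ`. -/
noncomputable def eNorm {n : Type*} [Fintype n] (v : n → ℝ) : ℝ :=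
  Real.sqrt (∑ i, (v i) ^ 2)

/-- The operator norm induced by the Euclidean norm. -/
noncomputable def opNorm {n : Type*} [Fintype n] (M : Matrix n n ℝ) : ℝ :=
  sSup ((fun v => eNorm (M.mulVec v)) '' {v | eNorm v ≤ 1})

/-- `x` is a trajectory of the linear switching system defined by `S`: it is continuous and
satisfies `x t = x 0 + ∫₀ᵗ A s ⬝ x s ds` for all `t ≥ 0`, for some measurable switching law
`A` taking values in `S` on `[0,∞)`. -/
def IsTrajectory {n : Type*} [Fintype n] (S : Set (Matrix n n ℝ)) (x : ℝ → n → ℝ) : Prop :=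
  Continuous x ∧ ∃ A : ℝ → Matrix n n ℝ,
    (∀ i j, Measurable fun s => A s i j) ∧ (∀ s, 0 ≤ s → A s ∈ S) ∧
    (∀ t, 0 ≤ t → IntervalIntegrable (fun s => (A s).mulVec (x s)) volume 0 t) ∧
    (∀ t, 0 ≤ t → x t = x 0 + ∫ s in (0:ℝ)..t, (A s).mulVec (x s))

/-- The topological top Lyapunov exponent
`Λ(S) = lim_{t→∞} sup_x (1/t) log (‖x t‖/‖x 0‖)`, the supremum being over all trajectories
of the linear switching system defined by `S` with `x 0 ≠ 0`. -/
noncomputable def Lambda {n : Type*} [Fintype n] (S : Set (Matrix n n ℝ)) : ℝ :=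
  limUnder atTop fun t : ℝ =>
    sSup {r | ∃ x : ℝ → n → ℝ, IsTrajectory S x ∧ x 0 ≠ 0 ∧
      r = (1 / t) * Real.log (eNorm (x t) / eNorm (x 0))}

/-- `N` is a norm on `n → ℝ`. -/
structure IsNorm {n : Type*} [Fintype n] (N : (n → ℝ) → ℝ) : Prop where
  eq_zero_iff : ∀ v, N v = 0 ↔ v = 0
  smul : ∀ (a : ℝ) (v), N (a • v) = |a| * N v
  triangle : ∀ v w, N (v + w) ≤ N v + N w

/-- `N` is an extremal norm for `S`: `t ↦ e^{-tΛ(S)} N (x t)` is non-increasing on `[0,∞)`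
along every trajectory. -/
def IsExtremalNorm {n : Type*} [Fintype n] (S : Set (Matrix n n ℝ)) (N : (n → ℝ) → ℝ) : Prop :=
  IsNorm N ∧ ∀ x : ℝ → n → ℝ, IsTrajectory S x → ∀ s t : ℝ, 0 ≤ s → s ≤ t →
    Real.exp (-t * Lambda S) * N (x t) ≤ Real.exp (-s * Lambda S) * N (x s)

/-- `N` is a Barabanov norm for `S`. -/
def IsBarabanovNorm {n : Type*} [Fintype n] (S : Set (Matrix n n ℝ)) (N : (n → ℝ) → ℝ) : Prop :=
  IsExtremalNorm S N ∧ ∀ u : n → ℝ, ∃ x : ℝ → n → ℝ, IsTrajectory S x ∧ x 0 = u ∧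
    ∀ t : ℝ, 0 ≤ t → Real.exp (-t * Lambda S) * N (x t) = N u

/-- `S` is irreducible: no nontrivial proper subspace is invariant under every `A ∈ S`. -/
def IrreducibleSystem {n : Type*} [Fintype n] (S : Set (Matrix n n ℝ)) : Prop :=
  ¬ ∃ V : Submodule ℝ (n → ℝ), 0 < Module.finrank ℝ V ∧
    Module.finrank ℝ V < Fintype.card n ∧ ∀ A ∈ S, ∀ v ∈ V, A.mulVec v ∈ V

/-- A real matrix is Hurwitz if all of its complex eigenvalues have negative real part. -/
def IsHurwitz {n : Type*} [Fintype n] [DecidableEq n] (A : Matrix n n ℝ) : Prop :=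
  ∀ μ ∈ spectrum ℂ (A.map (Complex.ofReal ·)), μ.re < 0

/-- The Kronecker product of two column vectors in `ℝ²`, as a vector in `ℝ⁴`:
`(u ⊗ v) (i, j) = u i * v j`. -/
def vecKron (u v : Fin 2 → ℝ) : Fin 2 × Fin 2 → ℝ := fun p => u p.1 * v p.2

/-! ### Absolutely continuous functions and differential inequalities -/

open Topology

/-- `x` is locally absolutely continuous on `[0, ∞)`, and `g` is its derivative almost
everywhere on `(0, ∞)`. -/
structure ADiff (x g : ℝ → ℝ) : Prop where
  ac : ∀ T, 0 ≤ T → AbsolutelyContinuousOnInterval x 0 T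
  deriv : ∀ᵐ t, 0 < t → HasDerivAt x (g t) t

/-- The coordinatewise version of `ADiff` for vector-valued functions. -/
def VDiff {n : Type*} (x g : ℝ → n → ℝ) : Prop :=
  ∀ i, ADiff (fun t => x t i) (fun t => g t i)

/-- Absolute continuity passes to any function whose increments are controlled by those of
finitely many absolutely continuous functions. -/
lemma ac_of_dist_le {ι : Type*} [Fintype ι] {φ : ℝ → ℝ} {x : ι → ℝ → ℝ} {a b C : ℝ}
    (hx : ∀ i, AbsolutelyContinuousOnInterval (x i) a b)
    (h : ∀ s ∈ Set.uIcc a b, ∀ t ∈ Set.uIcc a b,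
      dist (φ s) (φ t) ≤ C * ∑ i, dist (x i s) (x i t)) :
    AbsolutelyContinuousOnInterval φ a b := by
  unfold AbsolutelyContinuousOnInterval at *
  have h1 := (tendsto_finsetSum Finset.univ (fun i _ => hx i)).const_mul C
  simp only [Finset.sum_const_zero, mul_zero] at h1
  refine squeeze_zero' (Eventually.of_forall fun E =>
    Finset.sum_nonneg fun _ _ => dist_nonneg) ?_ h1
  filter_upwards [mem_inf_of_right (mem_principal_self _)] with E hE
  rw [Finset.sum_comm, Finset.mul_sum]
  exact Finset.sum_le_sum fun i hi => h _ (hE.1 i hi).1 _ (hE.1 i hi).2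

namespace ADiff

variable {x y g k : ℝ → ℝ}

lemma add (hx : ADiff x g) (hy : ADiff y k) :
    ADiff (fun t => x t + y t) (fun t => g t + k t) where
  ac T hT := (hx.ac T hT).add (hy.ac T hT)
  deriv := by
    filter_upwards [hx.deriv, hy.deriv] with t h1 h2 ht using (h1 ht).add (h2 ht)

lemma sub (hx : ADiff x g) (hy : ADiff y k) :
    ADiff (fun t => x t - y t) (fun t => g t - k t) where
  ac T hT := (hx.ac T hT).sub (hy.ac T hT)
  deriv := by
    filter_upwards [hx.deriv, hy.deriv] with t h1 h2 ht using (h1 ht).sub (h2 ht)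

lemma mul (hx : ADiff x g) (hy : ADiff y k) :
    ADiff (fun t => x t * y t) (fun t => g t * y t + x t * k t) where
  ac T hT := (hx.ac T hT).mul (hy.ac T hT)
  deriv := by
    filter_upwards [hx.deriv, hy.deriv] with t h1 h2 ht using (h1 ht).mul (h2 ht)

lemma const_mul (c : ℝ) (hx : ADiff x g) : ADiff (fun t => c * x t) (fun t => c * g t) where
  ac T hT := (hx.ac T hT).const_mul c
  deriv := by
    filter_upwards [hx.deriv] with t h1 ht using (h1 ht).const_mul c

lemma linear (c : ℝ) : ADiff (fun t => c * t) (fun _ => c) where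
  ac T _ := ((LipschitzWith.id (α := ℝ)).lipschitzOnWith).absolutelyContinuousOnInterval.const_mul c
  deriv := by
    refine Eventually.of_forall fun t _ => ?_
    simpa using (hasDerivAt_id t).const_mul c

lemma exp (hx : ADiff x g) : ADiff (fun t => Real.exp (x t)) (fun t => Real.exp (x t) * g t) where
  ac T hT := by
    obtain ⟨M, hM⟩ := (hx.ac T hT).exists_bound
    refine ac_of_dist_le (ι := Unit) (x := fun _ => x) (C := Real.exp M) (fun _ => hx.ac T hT) ?_
    intro s hs t ht
    have key : ∀ a b : ℝ, |a| ≤ M → Real.exp a - Real.exp b ≤ Real.exp M * |a - b| := by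
      intro a b ha
      have h1 : Real.exp a ≤ Real.exp M := Real.exp_le_exp.2 ((le_abs_self a).trans ha)
      have h2 : Real.exp b = Real.exp a * Real.exp (b - a) := by rw [← Real.exp_add]; ring_nf
      have h3 := Real.add_one_le_exp (b - a)
      have h4 := Real.exp_pos a
      calc Real.exp a - Real.exp b ≤ Real.exp a * (a - b) := by nlinarith
        _ ≤ Real.exp a * |a - b| := by gcongr; exact le_abs_self _
        _ ≤ _ := by gcongr
    simp only [Finset.univ_unique, Finset.sum_singleton, Real.dist_eq]
    rw [abs_le']
    refine ⟨key _ _ (hM s hs), ?_⟩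
    rw [neg_sub, abs_sub_comm (x s)]
    exact key _ _ (hM t ht)
  deriv := by
    filter_upwards [hx.deriv] with t h1 ht using (h1 ht).exp

/-- An integral function is absolutely continuous, with the integrand as its derivative almost
everywhere (Lebesgue differentiation). -/
lemma of_integral (hg : ∀ T, 0 ≤ T → IntervalIntegrable g volume 0 T)
    (hx : ∀ t, 0 ≤ t → x t = x 0 + ∫ s in (0:ℝ)..t, g s) : ADiff x g where
  ac T hT := by
    refine ac_of_dist_le (ι := Unit) (C := 1) (x := fun _ t => ∫ s in (0:ℝ)..t, g s)
      (fun _ => (hg T hT).absolutelyContinuousOnInterval_intervalIntegral (by simp)) ?_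
    intro s hs t ht
    rw [Set.uIcc_of_le hT] at hs ht
    rw [hx s hs.1, hx t ht.1]
    simp
  deriv := by
    have h : ∀ᵐ t, ∀ n : ℕ, t ∈ Set.uIcc 0 (n:ℝ) → ∀ c ∈ Set.uIcc 0 (n:ℝ),
        HasDerivAt (fun t => ∫ s in c..t, g s) (g t) t :=
      ae_all_iff.2 fun n => (hg n n.cast_nonneg).ae_hasDerivAt_integral
    filter_upwards [h] with t ht h0
    obtain ⟨n, hn⟩ := exists_nat_ge t
    have h1 := ht n (by rw [Set.uIcc_of_le n.cast_nonneg]; exact ⟨h0.le, hn⟩) 0 (by simp)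
    refine (h1.const_add (x 0)).congr_of_eventuallyEq ?_
    filter_upwards [lt_mem_nhds h0] with s hs using hx s hs.le

lemma shift (hx : ADiff x g) {T : ℝ} (hT : 0 ≤ T) :
    ADiff (fun s => x (T + s)) (fun s => g (T + s)) where
  ac S hS := by
    have h := ((hx.ac (T + S) (by linarith)).mono (c := T) (d := T + S) (by
      rw [Set.uIcc_of_le (by linarith), Set.uIcc_of_le (by linarith)]
      exact Set.Icc_subset_Icc_left hT))
    rw [absolutelyContinuousOnInterval_iff] at h ⊢
    intro ε hε
    obtain ⟨δ, hδ, h⟩ := h ε hε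
    refine ⟨δ, hδ, fun E hE hEd => ?_⟩
    refine h (E.1, fun i => (T + (E.2 i).1, T + (E.2 i).2)) ⟨?_, ?_⟩ (by simpa using hEd)
    · intro i hi
      have := hE.1 i hi
      rw [Set.uIcc_of_le hS] at this
      rw [Set.uIcc_of_le (by linarith)]
      simp only [Set.mem_Icc] at this ⊢
      refine ⟨⟨?_, ?_⟩, ?_, ?_⟩ <;> linarith [this.1.1, this.1.2, this.2.1, this.2.2]
    · intro i hi j hj hij
      have := hE.2 hi hj hij
      simp only [Function.onFun] at this ⊢
      rw [Set.disjoint_left] at this ⊢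
      intro a ha hb
      have key : ∀ p q : ℝ, a ∈ Set.uIoc (T + p) (T + q) → a - T ∈ Set.uIoc p q := by
        intro p q h
        rw [Set.mem_uIoc] at h ⊢
        rcases h with h | h
        · left; constructor <;> linarith [h.1, h.2]
        · right; constructor <;> linarith [h.1, h.2]
      exact this (key _ _ ha) (key _ _ hb)
  deriv := by
    have h : ∀ᵐ s : ℝ, 0 < T + s → HasDerivAt x (g (T + s)) (T + s) :=
      (quasiMeasurePreserving_add_left volume T).ae hx.deriv
    filter_upwards [h] with s hs h0
    simpa using (hs (by linarith)).comp_const_add T s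

/-- An absolutely continuous function with nonpositive derivative is nonincreasing. -/
lemma antitone (hx : ADiff x g) (hg : ∀ᵐ t, 0 < t → g t ≤ 0) {s t : ℝ} (hs : 0 ≤ s)
    (hst : s ≤ t) : x t ≤ x s := by
  have h := ((hx.ac t (hs.trans hst)).mono (c := s) (d := t) (by
      rw [Set.uIcc_of_le hst, Set.uIcc_of_le (hs.trans hst)]
      exact Set.Icc_subset_Icc_left hs)).integral_deriv_eq_sub
  rw [intervalIntegral.integral_of_le hst] at h
  have h2 : ∫ r in Set.Ioc s t, _root_.deriv x r ≤ 0 := by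
    apply integral_nonpos_of_ae
    rw [EventuallyLE, ae_restrict_iff' measurableSet_Ioc]
    filter_upwards [hx.deriv, hg] with r h1 h2 hr
    have h0 : 0 < r := hs.trans_lt hr.1
    rw [(h1 h0).deriv]
    exact h2 h0
  linarith

end ADiff

lemma VDiff.sub {n : Type*} {x y g k : ℝ → n → ℝ} (hx : VDiff x g) (hy : VDiff y k) :
    VDiff (fun t => x t - y t) (fun t => g t - k t) := fun i => (hx i).sub (hy i)

lemma VDiff.shift {n : Type*} {x g : ℝ → n → ℝ} (hx : VDiff x g) {T : ℝ} (hT : 0 ≤ T) :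
    VDiff (fun s => x (T + s)) (fun s => g (T + s)) := fun i => (hx i).shift hT

/-- If a Lipschitz function `p` satisfies a one-sided first-order estimate with slope `c t` at
`x t` in the direction `g t = x' t`, then `p ∘ x` is absolutely continuous with derivative at
most `c`. -/
lemma VDiff.comp_lipschitz {n : Type*} [Fintype n] {x g : ℝ → n → ℝ} (hx : VDiff x g)
    {p : (n → ℝ) → ℝ} {C : ℝ} (hp : ∀ a b, |p a - p b| ≤ C * ‖a - b‖) {c : ℝ → ℝ}
    (hc : ∀ᵐ t, 0 < t → ∃ K, ∀ h, 0 < h → h ≤ 1 →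
      p (x t + h • g t) ≤ p (x t) + h * c t + K * h ^ 2) :
    ∃ φ', ADiff (fun t => p (x t)) φ' ∧ ∀ᵐ t, 0 < t → φ' t ≤ c t := by
  have hac : ∀ T, 0 ≤ T → AbsolutelyContinuousOnInterval (fun t => p (x t)) 0 T := by
    intro T hT
    refine ac_of_dist_le (x := fun i t => x t i) (C := |C|) (fun i => (hx i).ac T hT) ?_
    intro s _ t _
    rw [Real.dist_eq]
    refine (hp _ _).trans ?_
    have h1 : ‖x s - x t‖ ≤ ∑ i, dist (x s i) (x t i) := by
      refine (pi_norm_le_iff_of_nonneg (Finset.sum_nonneg fun _ _ => dist_nonneg)).2 fun i => ?_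
      rw [Pi.sub_apply, ← dist_eq_norm]
      exact Finset.single_le_sum (f := fun i => dist (x s i) (x t i))
        (fun _ _ => dist_nonneg) (Finset.mem_univ i)
    exact mul_le_mul (le_abs_self C) h1 (norm_nonneg _) (abs_nonneg _)
  have hd : ∀ᵐ t : ℝ, ∀ N : ℕ, t ∈ Set.uIcc 0 (N:ℝ) → DifferentiableAt ℝ (fun t => p (x t)) t :=
    ae_all_iff.2 fun N => (hac N N.cast_nonneg).ae_differentiableAt
  have hd' : ∀ᵐ t : ℝ, 0 < t → HasDerivAt (fun t => p (x t)) (deriv (fun t => p (x t)) t) t := by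
    filter_upwards [hd] with t ht h0
    obtain ⟨N, hN⟩ := exists_nat_ge t
    exact (ht N (by rw [Set.uIcc_of_le N.cast_nonneg]; exact ⟨h0.le, hN⟩)).hasDerivAt
  refine ⟨deriv fun t => p (x t), ⟨hac, hd'⟩, ?_⟩
  have hxd : ∀ᵐ t : ℝ, ∀ i, 0 < t → HasDerivAt (fun t => x t i) (g t i) t :=
    ae_all_iff.2 fun i => (hx i).deriv
  filter_upwards [hd', hxd, hc] with t h1 h2 h3 h0
  obtain ⟨K, hK⟩ := h3 h0
  have hX : HasDerivAt x (g t) t := hasDerivAt_pi.2 fun i => h2 i h0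
  have t1 := (h1 h0).tendsto_slope_zero_right
  have t2 := hX.tendsto_slope_zero_right
  have t3 : Tendsto (fun h : ℝ => c t + K * h + C * ‖h⁻¹ • (x (t + h) - x t) - g t‖)
      (𝓝[>] 0) (𝓝 (c t + K * 0 + C * ‖g t - g t‖)) := by
    refine (tendsto_const_nhds.add ((tendsto_id.mono_left nhdsWithin_le_nhds).const_mul K)).add ?_
    exact (t2.sub_const _).norm.const_mul C
  simp only [mul_zero, sub_self, norm_zero, add_zero] at t3
  refine le_of_tendsto_of_tendsto t1 t3 ?_
  filter_upwards [Ioo_mem_nhdsGT (zero_lt_one (α := ℝ))] with h hh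
  have e1 := hK h hh.1 hh.2.le
  have e2 := (le_abs_self _).trans (hp (x (t + h)) (x t + h • g t))
  have e3 : x (t + h) - (x t + h • g t) = h • (h⁻¹ • (x (t + h) - x t) - g t) := by
    rw [smul_sub, smul_smul, mul_inv_cancel₀ hh.1.ne', one_smul]; abel
  rw [e3, norm_smul, Real.norm_of_nonneg hh.1.le] at e2
  rw [smul_eq_mul, inv_mul_le_iff₀ hh.1]
  nlinarith

/-! ### Linear equations with measurable coefficients -/

section LinearODE

variable {n : Type*} [Fintype n]

lemma norm_mulVec_le_of_entries {A : Matrix n n ℝ} {L : ℝ} (hA : ∀ i j, |A i j| ≤ L)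
    (v : n → ℝ) : ‖A.mulVec v‖ ≤ Fintype.card n * L * ‖v‖ := by
  rcases isEmpty_or_nonempty n with h | ⟨⟨i₀⟩⟩
  · simp [Subsingleton.elim v 0]
  have hL : 0 ≤ L := (abs_nonneg _).trans (hA i₀ i₀)
  refine (pi_norm_le_iff_of_nonneg (by positivity)).2 fun i => ?_
  rw [Matrix.mulVec, dotProduct, Real.norm_eq_abs]
  refine (Finset.abs_sum_le_sum_abs _ _).trans ?_
  calc ∑ j, |A i j * v j| ≤ ∑ _j : n, L * ‖v‖ := by
        refine Finset.sum_le_sum fun j _ => ?_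
        rw [abs_mul]
        exact mul_le_mul (hA i j) (norm_le_pi_norm v j) (abs_nonneg _) hL
    _ = _ := by simp [mul_assoc]

lemma intervalIntegrable_mulVec {A : ℝ → Matrix n n ℝ} {L : ℝ}
    (hm : ∀ i j, Measurable fun s => A s i j) (hL : ∀ s, 0 ≤ s → ∀ i j, |A s i j| ≤ L)
    {x : ℝ → n → ℝ} (hx : Continuous x) {t : ℝ} (ht : 0 ≤ t) :
    IntervalIntegrable (fun s => (A s).mulVec (x s)) volume 0 t := by
  have hmeas : Measurable fun s => (A s).mulVec (x s) := by
    refine measurable_pi_lambda _ fun i => ?_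
    simp only [Matrix.mulVec, dotProduct]
    exact Finset.measurable_sum _ fun j _ =>
      (hm i j).mul ((continuous_apply j).comp hx).measurable
  obtain ⟨C, hC⟩ := (isCompact_Icc (a := (0:ℝ)) (b := t)).exists_bound_of_continuousOn
    hx.continuousOn
  rw [intervalIntegrable_iff_integrableOn_Icc_of_le ht]
  refine Measure.integrableOn_of_bounded (M := Fintype.card n * |L| * C) (by simp)
    hmeas.aestronglyMeasurable ?_
  rw [ae_restrict_iff' measurableSet_Icc]
  refine Eventually.of_forall fun s hs => ?_
  have h := norm_mulVec_le_of_entries (L := |L|)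
    (fun i j => (hL s hs.1 i j).trans (le_abs_self L)) (x s)
  refine h.trans ?_
  gcongr
  exact hC s hs

/-- The terms of the Dyson series: iterated integrals `∫₀ᵗ A(s) φₖ(s) ds`. -/
noncomputable def dyson (A : ℝ → Matrix n n ℝ) (v : n → ℝ) : ℕ → ℝ → n → ℝ
  | 0, _ => v
  | k + 1, t => ∫ s in (0:ℝ)..t, (A s).mulVec (dyson A v k s)

lemma dyson_continuous {A : ℝ → Matrix n n ℝ} {L : ℝ}
    (hm : ∀ i j, Measurable fun s => A s i j) (hL : ∀ s i j, |A s i j| ≤ L) (v : n → ℝ) (k : ℕ) :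
    Continuous (dyson A v k) := by
  induction k with
  | zero => exact continuous_const
  | succ k ih =>
    refine intervalIntegral.continuous_primitive (fun a b => ?_) 0
    have h0 : ∀ t, IntervalIntegrable (fun s => (A s).mulVec (dyson A v k s)) volume 0 t := by
      intro t
      rcases le_total 0 t with ht | ht
      · exact intervalIntegrable_mulVec hm (fun s _ => hL s) ih ht
      · have := intervalIntegrable_mulVec (A := fun s => A (-s)) (x := fun s => dyson A v k (-s))
          (fun i j => (hm i j).comp measurable_neg) (fun s _ => hL (-s)) (ih.comp continuous_neg)
          (neg_nonneg.2 ht)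
        have h2 := (IntervalIntegrable.iff_comp_neg
          (f := fun s => (A s).mulVec (dyson A v k s)) (a := 0) (b := t) (by simp)).2
        rw [neg_zero] at h2
        exact h2 this
    exact (h0 a).symm.trans (h0 b)

/-- The factorial bound that makes the Dyson series converge. -/
lemma norm_dyson_le {A : ℝ → Matrix n n ℝ} {L : ℝ} (hL : ∀ s i j, |A s i j| ≤ L) (v : n → ℝ)
    (k : ℕ) {t : ℝ} (ht : 0 ≤ t) :
    ‖dyson A v k t‖ ≤ (Fintype.card n * |L| * t) ^ k / k.factorial * ‖v‖ := by
  induction k generalizing t with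
  | zero => simp [dyson]
  | succ k ih =>
    set M := Fintype.card n * |L| with hM
    have hM0 : 0 ≤ M := by positivity
    have h1 : ‖dyson A v (k + 1) t‖ ≤
        ∫ s in (0:ℝ)..t, M * ((M * s) ^ k / k.factorial * ‖v‖) := by
      refine intervalIntegral.norm_integral_le_of_norm_le ht
        (Eventually.of_forall fun s hs => ?_) (Continuous.intervalIntegrable (by fun_prop) _ _)
      refine (norm_mulVec_le_of_entries (L := |L|)
        (fun i j => (hL s i j).trans (le_abs_self L)) _).trans ?_
      exact mul_le_mul_of_nonneg_left (ih hs.1.le) hM0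
    refine h1.trans (le_of_eq ?_)
    have h2 : (fun s : ℝ => M * ((M * s) ^ k / k.factorial * ‖v‖)) =
        fun s => (M ^ (k + 1) / k.factorial * ‖v‖) * s ^ k := by
      ext s; rw [mul_pow]; ring
    rw [h2, intervalIntegral.integral_const_mul, integral_pow, Nat.factorial_succ]
    push_cast
    rw [mul_pow M t]
    field_simp
    simp

/-- Existence of solutions of a linear equation with bounded measurable coefficients: the sum
of the Dyson series. The coefficients are frozen at time `0` for negative times. -/
lemma exists_solution {A : ℝ → Matrix n n ℝ} {L : ℝ}
    (hm : ∀ i j, Measurable fun s => A s i j) (hL : ∀ s, 0 ≤ s → ∀ i j, |A s i j| ≤ L)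
    (v : n → ℝ) :
    ∃ x : ℝ → n → ℝ, Continuous x ∧ x 0 = v ∧
      ∀ t, 0 ≤ t → x t = x 0 + ∫ s in (0:ℝ)..t, (A s).mulVec (x s) := by
  set A' : ℝ → Matrix n n ℝ := fun s => A (max s 0) with hA'
  have hm' : ∀ i j, Measurable fun s => A' s i j := fun i j =>
    (hm i j).comp (measurable_id.max measurable_const)
  have hL' : ∀ s i j, |A' s i j| ≤ L := fun s => hL _ (le_max_right _ _)
  set M := Fintype.card n * |L| with hM
  have hM0 : 0 ≤ M := by positivity
  have hsum : ∀ T : ℝ, Summable fun k : ℕ => (M * T) ^ k / k.factorial * ‖v‖ := fun T =>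
    (Real.summable_pow_div_factorial (M * T)).mul_right _
  have hle : ∀ (k : ℕ) {t T : ℝ}, 0 ≤ t → t ≤ T →
      ‖dyson A' v k t‖ ≤ (M * T) ^ k / k.factorial * ‖v‖ := by
    intro k t T ht hT
    refine (norm_dyson_le hL' v k ht).trans ?_
    gcongr
  have hs : ∀ t : ℝ, 0 ≤ t → Summable fun k => dyson A' v k t := fun t ht =>
    Summable.of_norm_bounded (hsum t) fun k => hle k ht le_rfl
  set x : ℝ → n → ℝ := fun t => ∑' k, dyson A' v k (max t 0) with hx
  have hxc : Continuous x := by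
    rw [continuous_iff_continuousAt]
    intro t
    set T := |t| + 1
    have hc : Continuous fun s => ∑' k, dyson A' v k (min (max s 0) T) := by
      refine continuous_tsum (u := fun k : ℕ => (M * T) ^ k / k.factorial * ‖v‖)
        (fun k => (dyson_continuous hm' hL' v k).comp (by fun_prop)) (hsum T) fun k s => ?_
      exact hle k (le_min (le_max_right _ _) (by positivity)) (min_le_right _ _)
    refine hc.continuousAt.congr ?_
    filter_upwards [gt_mem_nhds (show t < T from (le_abs_self t).trans_lt (lt_add_one _))]
      with s hs
    rw [hx, min_eq_left (max_le hs.le (by positivity))]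
  have hx0 : x 0 = v := by
    have h0 : ∀ k : ℕ, k ≠ 0 → dyson A' v k (max 0 0) = 0 := by
      intro k hk
      obtain ⟨j, rfl⟩ := Nat.exists_eq_succ_of_ne_zero hk
      simp [dyson]
    show ∑' k, dyson A' v k (max 0 0) = v
    rw [tsum_eq_single 0 h0]
    rfl
  refine ⟨x, hxc, hx0, fun t ht => ?_⟩
  have hI := intervalIntegral.hasSum_integral_of_dominated_convergence (μ := volume) (a := 0)
    (b := t) (F := fun k s => (A' s).mulVec (dyson A' v k s))
    (f := fun s => (A' s).mulVec (x s))
    (fun k _ => M * ((M * t) ^ k / k.factorial * ‖v‖)) ?_ ?_ ?_ ?_ ?_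
  · have h1 : x t = v + ∑' k, dyson A' v (k + 1) t := by
      rw [hx]
      simp only [max_eq_left ht]
      rw [(hs t ht).tsum_eq_zero_add]
      rfl
    rw [h1, hx0]
    congr 1
    have h2 : ∫ s in (0:ℝ)..t, (A s).mulVec (x s) = ∫ s in (0:ℝ)..t, (A' s).mulVec (x s) := by
      refine intervalIntegral.integral_congr fun s hs => ?_
      rw [Set.uIcc_of_le ht] at hs
      simp only [hA', max_eq_left hs.1]
    rw [h2]
    exact hI.tsum_eq
  · intro k
    have h := (intervalIntegrable_mulVec hm' (fun s _ => hL' s)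
      (dyson_continuous hm' hL' v k) ht)
    exact h.def'.aestronglyMeasurable
  · intro k
    refine Eventually.of_forall fun s hs => ?_
    rw [Set.uIoc_of_le ht] at hs
    refine (norm_mulVec_le_of_entries (L := |L|)
        (fun i j => (hL' s i j).trans (le_abs_self L)) _).trans ?_
    exact mul_le_mul_of_nonneg_left (hle k hs.1.le hs.2) hM0
  · exact Eventually.of_forall fun s _ => (hsum t).mul_left M
  · exact intervalIntegrable_const
  · refine Eventually.of_forall fun s hs' => ?_
    rw [Set.uIoc_of_le ht] at hs'
    have h1 := (hs s hs'.1.le).hasSum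
    have h2 := h1.map (Matrix.mulVecLin (A' s)) (by
      exact (LinearMap.continuous_of_finiteDimensional (Matrix.mulVecLin (A' s))))
    simpa [Function.comp_def, hx, max_eq_left hs'.1.le] using h2

lemma vdiff_of_integral {x g : ℝ → n → ℝ} (hI : ∀ t, 0 ≤ t → IntervalIntegrable g volume 0 t)
    (hxi : ∀ t, 0 ≤ t → x t = x 0 + ∫ s in (0:ℝ)..t, g s) : VDiff x g := by
  intro i
  refine ADiff.of_integral (fun T hT => ?_) fun t ht => ?_
  · exact ⟨(ContinuousLinearMap.proj (R := ℝ) (φ := fun _ : n => ℝ) i).integrable_comp (hI T hT).1,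
      (ContinuousLinearMap.proj (R := ℝ) (φ := fun _ : n => ℝ) i).integrable_comp (hI T hT).2⟩
  · have h := congrFun (hxi t ht) i
    have h2 := (ContinuousLinearMap.proj (R := ℝ) (φ := fun _ : n => ℝ) i).intervalIntegral_comp_comm
      (hI t ht)
    simp only [ContinuousLinearMap.proj_apply] at h2
    rw [h, Pi.add_apply, h2]

/-- A law with values in `S` generates a trajectory from every initial point. -/
lemma exists_trajectory {S : Set (Matrix n n ℝ)} {L : ℝ} (hS : ∀ M ∈ S, ∀ i j, |M i j| ≤ L)
    {A : ℝ → Matrix n n ℝ} (hm : ∀ i j, Measurable fun s => A s i j)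
    (hA : ∀ s, 0 ≤ s → A s ∈ S) (v : n → ℝ) :
    ∃ x : ℝ → n → ℝ, IsTrajectory S x ∧ x 0 = v ∧ VDiff x (fun s => (A s).mulVec (x s)) := by
  have hL : ∀ s, 0 ≤ s → ∀ i j, |A s i j| ≤ L := fun s hs => hS _ (hA s hs)
  obtain ⟨x, hx, hx0, hxi⟩ := exists_solution hm hL v
  have hI := fun t (ht : (0:ℝ) ≤ t) => intervalIntegrable_mulVec hm hL hx ht
  refine ⟨x, ⟨hx, A, hm, hA, hI, hxi⟩, hx0, ?_⟩
  exact vdiff_of_integral hI hxi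

/-- A trajectory solves its differential equation almost everywhere, coordinatewise. -/
lemma IsTrajectory.vdiff {S : Set (Matrix n n ℝ)} {x : ℝ → n → ℝ} (h : IsTrajectory S x) :
    ∃ A : ℝ → Matrix n n ℝ, (∀ i j, Measurable fun s => A s i j) ∧ (∀ s, 0 ≤ s → A s ∈ S) ∧
      VDiff x (fun s => (A s).mulVec (x s)) := by
  obtain ⟨hx, A, hm, hA, hI, hxi⟩ := h
  refine ⟨A, hm, hA, ?_⟩
  exact vdiff_of_integral hI hxi

end LinearODE

/-! ### Growth of trajectories and the Lyapunov exponent -/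

/-- Grönwall's inequality: if `φ' ≤ a φ` almost everywhere and `α` is a primitive of `a`, then
`exp (-α) φ` is nonincreasing. -/
lemma ADiff.gronwall {φ φ' α a : ℝ → ℝ} (hφ : ADiff φ φ') (hα : ADiff α a)
    (h : ∀ᵐ t, 0 < t → φ' t ≤ a t * φ t) {s t : ℝ} (hs : 0 ≤ s) (hst : s ≤ t) :
    Real.exp (-α t) * φ t ≤ Real.exp (-α s) * φ s := by
  have h1 := ((hα.const_mul (-1)).exp).mul hφ
  have h2 := h1.antitone (by
    filter_upwards [h] with t ht h0
    have := Real.exp_pos (-1 * α t)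
    nlinarith [ht h0]) hs hst
  simpa [neg_one_mul] using h2

section Growth

variable {n : Type*} [Fintype n]

/-- Two-sided Grönwall bound: with bounded coefficients the norm of a solution can neither grow
nor decay faster than exponentially. -/
lemma VDiff.norm_le_exp {x : ℝ → n → ℝ} {A : ℝ → Matrix n n ℝ} {L : ℝ}
    (hx : VDiff x fun s => (A s).mulVec (x s)) (hL : ∀ s, 0 ≤ s → ∀ i j, |A s i j| ≤ L)
    {s t : ℝ} (hs : 0 ≤ s) (hst : s ≤ t) :
    ‖x t‖ ≤ Real.exp (Fintype.card n * L * (t - s)) * ‖x s‖ ∧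
    ‖x s‖ ≤ Real.exp (Fintype.card n * L * (t - s)) * ‖x t‖ := by
  set M := Fintype.card n * L
  have hM : ∀ t, 0 < t → ‖(A t).mulVec (x t)‖ ≤ M * ‖x t‖ := fun t ht =>
    norm_mulVec_le_of_entries (hL t ht.le) _
  have e1 : ∀ a b : ℝ, Real.exp (M * (a - b)) = Real.exp (M * a) * Real.exp (-(M * b)) := by
    intro a b; rw [← Real.exp_add]; ring_nf
  constructor
  · obtain ⟨φ', h1, h2⟩ := hx.comp_lipschitz (p := fun v => ‖v‖) (C := 1)
      (c := fun t => M * ‖x t‖) (fun a b => by simpa using abs_norm_sub_norm_le a b) (by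
      refine Eventually.of_forall fun t ht => ⟨0, fun h h0 _ => ?_⟩
      refine (norm_add_le _ _).trans ?_
      rw [norm_smul, Real.norm_of_nonneg h0.le]
      nlinarith [hM t ht])
    have h3 := h1.gronwall (ADiff.linear M) h2 hs hst
    rw [e1, mul_assoc]
    rwa [Real.exp_neg, inv_mul_le_iff₀ (Real.exp_pos _)] at h3
  · obtain ⟨φ', h1, h2⟩ := hx.comp_lipschitz (p := fun v => -‖v‖) (C := 1)
      (c := fun t => M * ‖x t‖) (fun a b => by
        rw [neg_sub_neg, abs_sub_comm]; simpa using abs_norm_sub_norm_le a b) (by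
      refine Eventually.of_forall fun t ht => ⟨0, fun h h0 _ => ?_⟩
      have h4 : ‖x t‖ ≤ ‖x t + h • (A t).mulVec (x t)‖ + ‖h • (A t).mulVec (x t)‖ := by
        simpa using norm_sub_le (x t + h • (A t).mulVec (x t)) (h • (A t).mulVec (x t))
      rw [norm_smul, Real.norm_of_nonneg h0.le] at h4
      nlinarith [hM t ht])
    have h3 := h1.gronwall (ADiff.linear (-M)) (by
      filter_upwards [h2] with t ht h0
      linarith [ht h0]) hs hst
    have h4 : Real.exp (M * s) * ‖x s‖ ≤ Real.exp (M * t) * ‖x t‖ := by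
      simp only [neg_mul, neg_neg, mul_neg, neg_le_neg_iff] at h3
      exact h3
    rw [e1, mul_assoc, mul_left_comm, Real.exp_neg, ← div_eq_inv_mul, le_div_iff₀ (Real.exp_pos _)]
    linarith

lemma norm_le_eNorm (v : n → ℝ) : ‖v‖ ≤ eNorm v := by
  refine (pi_norm_le_iff_of_nonneg (Real.sqrt_nonneg _)).2 fun i => ?_
  rw [Real.norm_eq_abs]
  refine Real.abs_le_sqrt ?_
  exact Finset.single_le_sum (f := fun i => (v i) ^ 2) (fun _ _ => sq_nonneg _) (Finset.mem_univ i)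

lemma eNorm_le_norm (v : n → ℝ) : eNorm v ≤ Real.sqrt (Fintype.card n) * ‖v‖ := by
  rw [eNorm, Real.sqrt_le_left (by positivity), mul_pow, Real.sq_sqrt (by positivity)]
  calc ∑ i, (v i) ^ 2 ≤ ∑ _i : n, ‖v‖ ^ 2 := Finset.sum_le_sum fun i _ => by
        rw [← sq_abs]; exact pow_le_pow_left₀ (abs_nonneg _) (norm_le_pi_norm v i) 2
    _ = _ := by simp

lemma eNorm_pos {v : n → ℝ} (hv : v ≠ 0) : 0 < eNorm v :=
  (norm_pos_iff.2 hv).trans_le (norm_le_eNorm v)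

lemma IsTrajectory.shift {S : Set (Matrix n n ℝ)} {L : ℝ} (hS : ∀ M ∈ S, ∀ i j, |M i j| ≤ L)
    {x : ℝ → n → ℝ} (h : IsTrajectory S x) {T : ℝ} (hT : 0 ≤ T) :
    IsTrajectory S (fun t => x (T + t)) := by
  obtain ⟨hx, A, hm, hA, hI, hxi⟩ := h
  have hx' : Continuous fun t => x (T + t) := hx.comp (by fun_prop)
  have hm' : ∀ i j, Measurable fun s => A (T + s) i j := fun i j =>
    (hm i j).comp (measurable_const_add T)
  have hA' : ∀ s, 0 ≤ s → A (T + s) ∈ S := fun s hs => hA _ (by linarith)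
  refine ⟨hx', fun s => A (T + s), hm', hA', fun t ht =>
    intervalIntegrable_mulVec hm' (fun s hs => hS _ (hA' s hs)) hx' ht, fun t ht => ?_⟩
  rw [intervalIntegral.integral_comp_add_left (fun s => (A s).mulVec (x s)) T]
  show x (T + t) = x (T + 0) + _
  rw [hxi (T + t) (by linarith), add_zero, hxi T hT, add_assoc,
    intervalIntegral.integral_add_adjacent_intervals (hI T hT)]
  exact (hI T hT).symm.trans (hI (T + t) (by linarith))

/-- Fekete's lemma in continuous time. -/
lemma exists_tendsto_div_of_subadditive {g : ℝ → ℝ} {M c : ℝ} (hM : 0 ≤ M) (hc : 0 ≤ c)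
    (hg : ∀ s t, 0 ≤ s → 0 ≤ t → g (s + t) ≤ g s + g t)
    (hb : ∀ t, 0 ≤ t → |g t| ≤ M * t + c) :
    ∃ l, Tendsto (fun t => g t / t) atTop (𝓝 l) := by
  have hsub : Subadditive fun n : ℕ => g n := fun m n => by
    push_cast; exact hg _ _ m.cast_nonneg n.cast_nonneg
  have hbdd : BddBelow (Set.range fun n : ℕ => g n / n) := by
    refine ⟨-(M + c), ?_⟩
    rintro _ ⟨n, rfl⟩
    rcases Nat.eq_zero_or_pos n with rfl | hn
    · simp only [Nat.cast_zero, div_zero]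
      linarith
    have hn' : (1:ℝ) ≤ n := by exact_mod_cast hn
    show -(M + c) ≤ g n / n
    rw [le_div_iff₀ (by linarith)]
    have := neg_le_of_abs_le (hb n n.cast_nonneg)
    nlinarith
  have hlim := hsub.tendsto_lim hbdd
  refine ⟨hsub.lim, ?_⟩
  have hC : Tendsto (fun t : ℝ => (M + c) / t) atTop (𝓝 0) := tendsto_const_nhds.div_atTop tendsto_id
  have hF := ((hlim.comp (tendsto_nat_floor_atTop (α := ℝ))).mul
    (tendsto_nat_floor_div_atTop (R := ℝ))).add hC
  have hCe := ((hlim.comp (tendsto_nat_ceil_atTop (α := ℝ))).mul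
    (tendsto_nat_ceil_div_atTop (R := ℝ))).sub hC
  simp only [mul_one, add_zero, sub_zero, Function.comp_def] at hF hCe
  refine tendsto_of_tendsto_of_tendsto_of_le_of_le' hCe hF ?_ ?_
  · filter_upwards [eventually_ge_atTop 1] with t ht
    have ht0 : 0 ≤ t := by linarith
    have hn : (0:ℝ) < ⌈t⌉₊ := by linarith [Nat.le_ceil t]
    rw [div_mul_div_cancel₀ hn.ne', ← sub_div]
    gcongr
    have h1 := hg t (⌈t⌉₊ - t) (by linarith) (by linarith [Nat.le_ceil t])
    have h2 := (le_abs_self _).trans (hb (⌈t⌉₊ - t) (by linarith [Nat.le_ceil t]))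
    have h3 := Nat.ceil_lt_add_one ht0
    rw [add_sub_cancel] at h1
    nlinarith
  · filter_upwards [eventually_ge_atTop 1] with t ht
    have ht0 : 0 ≤ t := by linarith
    have hn : (0:ℝ) < ⌊t⌋₊ := by exact_mod_cast Nat.floor_pos.2 ht
    rw [div_mul_div_cancel₀ hn.ne', ← add_div]
    gcongr
    have hfl := Nat.floor_le ht0
    have h1 := hg ⌊t⌋₊ (t - ⌊t⌋₊) (by linarith) (by linarith)
    have h2 := (le_abs_self _).trans (hb (t - ⌊t⌋₊) (by linarith))
    have h3 := Nat.lt_floor_add_one t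
    rw [add_sub_cancel] at h1
    nlinarith

open scoped Pointwise in
/-- For a nonempty bounded set `S` the limit defining `Lambda S` exists, so `Lambda S` controls
the growth of all trajectories and is approached by some. -/
lemma Lambda_spec [Nonempty n] {S : Set (Matrix n n ℝ)} {L : ℝ}
    (hS : ∀ M ∈ S, ∀ i j, |M i j| ≤ L) (hne : S.Nonempty) {ε : ℝ} (hε : 0 < ε) :
    ∃ T : ℝ, 0 < T ∧ ∀ t, T ≤ t →
      (∀ x, IsTrajectory S x → x 0 ≠ 0 →
        Real.log (eNorm (x t) / eNorm (x 0)) ≤ (Lambda S + ε) * t) ∧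
      ∃ x, IsTrajectory S x ∧ x 0 ≠ 0 ∧
        (Lambda S - ε) * t ≤ Real.log (eNorm (x t) / eNorm (x 0)) := by
  obtain ⟨A₀, hA₀⟩ := hne
  have hL0 : 0 ≤ L := by
    obtain ⟨i⟩ := ‹Nonempty n›
    exact (abs_nonneg _).trans (hS _ hA₀ i i)
  set M := Fintype.card n * L
  have hM0 : 0 ≤ M := by positivity
  set k := Real.sqrt (Fintype.card n)
  have hk : 1 ≤ k := by
    rw [Real.one_le_sqrt]
    exact_mod_cast Fintype.card_pos
  have hk0 : 0 < k := by linarith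
  have hbd : ∀ x, IsTrajectory S x → ∀ s t, 0 ≤ s → s ≤ t →
      ‖x t‖ ≤ Real.exp (M * (t - s)) * ‖x s‖ ∧ ‖x s‖ ≤ Real.exp (M * (t - s)) * ‖x t‖ := by
    intro x hx s t hs hst
    obtain ⟨A, -, hA, hv⟩ := hx.vdiff
    exact hv.norm_le_exp (fun s hs => hS _ (hA s hs)) hs hst
  have hnz : ∀ x, IsTrajectory S x → x 0 ≠ 0 → ∀ t, 0 ≤ t → x t ≠ 0 := by
    intro x hx hx0 t ht h0
    have := (hbd x hx 0 t le_rfl ht).2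
    rw [h0, norm_zero, mul_zero] at this
    exact hx0 (norm_le_zero_iff.1 this)
  set R : ℝ → Set ℝ := fun t => {r | ∃ x : ℝ → n → ℝ, IsTrajectory S x ∧ x 0 ≠ 0 ∧
      r = Real.log (eNorm (x t) / eNorm (x 0))} with hR
  have hRne : ∀ t, (R t).Nonempty := by
    intro t
    obtain ⟨x, hx, hx0, -⟩ := exists_trajectory hS (A := fun _ => A₀) (fun i j => measurable_const)
      (fun _ _ => hA₀) (fun _ => 1)
    refine ⟨_, x, hx, ?_, rfl⟩
    rw [hx0]
    obtain ⟨i⟩ := ‹Nonempty n›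
    exact fun h => one_ne_zero (congrFun h i)
  have hRb : ∀ t, 0 ≤ t → ∀ r ∈ R t, |r| ≤ M * t + Real.log k := by
    rintro t ht _ ⟨x, hx, hx0, rfl⟩
    obtain ⟨h1, h2⟩ := hbd x hx 0 t le_rfl ht
    rw [sub_zero] at h1 h2
    have p0 := eNorm_pos hx0
    have pt := eNorm_pos (hnz x hx hx0 t ht)
    have e : M * t + Real.log k = Real.log (Real.exp (M * t) * k) := by
      rw [Real.log_mul (Real.exp_pos _).ne' hk0.ne', Real.log_exp]
    have key : ∀ a b : n → ℝ, ‖a‖ ≤ Real.exp (M * t) * ‖b‖ →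
        eNorm a ≤ Real.exp (M * t) * k * eNorm b := by
      intro a b h
      calc eNorm a ≤ k * ‖a‖ := eNorm_le_norm a
        _ ≤ k * (Real.exp (M * t) * eNorm b) := by
          gcongr; exact h.trans (by gcongr; exact norm_le_eNorm b)
        _ = _ := by ring
    rw [e, abs_le']
    constructor
    · refine Real.log_le_log (by positivity) ?_
      rw [div_le_iff₀ p0]
      exact key _ _ h1
    · rw [← Real.log_inv, inv_div]
      refine Real.log_le_log (by positivity) ?_
      rw [div_le_iff₀ pt]
      exact key _ _ h2
  have hRbdd : ∀ t, 0 ≤ t → BddAbove (R t) := fun t ht =>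
    ⟨_, fun r hr => (le_abs_self r).trans (hRb t ht r hr)⟩
  have hsub : ∀ s t, 0 ≤ s → 0 ≤ t → sSup (R (s + t)) ≤ sSup (R s) + sSup (R t) := by
    intro s t hs ht
    refine csSup_le (hRne _) ?_
    rintro _ ⟨x, hx, hx0, rfl⟩
    have ps := eNorm_pos (hnz x hx hx0 s hs)
    have pst := eNorm_pos (hnz x hx hx0 (s + t) (by linarith))
    have p0 := eNorm_pos hx0
    have h1 : Real.log (eNorm (x s) / eNorm (x 0)) ≤ sSup (R s) :=
      le_csSup (hRbdd s hs) ⟨x, hx, hx0, rfl⟩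
    have h2 : Real.log (eNorm (x (s + t)) / eNorm (x s)) ≤ sSup (R t) :=
      le_csSup (hRbdd t ht) ⟨_, hx.shift hS hs, by simpa using hnz x hx hx0 s hs, by simp⟩
    rw [Real.log_div pst.ne' p0.ne']
    rw [Real.log_div ps.ne' p0.ne'] at h1
    rw [Real.log_div pst.ne' ps.ne'] at h2
    linarith
  obtain ⟨l, hl⟩ := exists_tendsto_div_of_subadditive (g := fun t => sSup (R t)) hM0
    (Real.log_nonneg hk) hsub (fun t ht => by
      obtain ⟨r, hr⟩ := hRne t
      rw [abs_le]
      constructor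
      · exact (neg_le_of_abs_le (hRb t ht r hr)).trans (le_csSup (hRbdd t ht) hr)
      · exact csSup_le ⟨r, hr⟩ fun r hr => (le_abs_self r).trans (hRb t ht r hr))
  have hΛ : Lambda S = l := by
    refine Tendsto.limUnder_eq (hl.congr' ?_)
    filter_upwards [eventually_gt_atTop 0] with t ht
    have h1 : {r | ∃ x : ℝ → n → ℝ, IsTrajectory S x ∧ x 0 ≠ 0 ∧
        r = (1 / t) * Real.log (eNorm (x t) / eNorm (x 0))} = (1 / t) • R t := by
      ext r
      simp only [hR, Set.mem_smul_set, Set.mem_ofPred_eq, smul_eq_mul]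
      constructor
      · rintro ⟨x, hx, hx0, rfl⟩
        exact ⟨_, ⟨x, hx, hx0, rfl⟩, rfl⟩
      · rintro ⟨_, ⟨x, hx, hx0, rfl⟩, rfl⟩
        exact ⟨x, hx, hx0, rfl⟩
    rw [h1, Real.sSup_smul_of_nonneg (by positivity), smul_eq_mul]
    ring
  rw [hΛ]
  have he := (hl.eventually (Ioo_mem_nhds (sub_lt_self l (half_pos hε))
    (lt_add_of_pos_right l hε))).and (eventually_ge_atTop (1:ℝ))
  obtain ⟨T, hT⟩ := eventually_atTop.1 he
  refine ⟨max T (2 / ε), by positivity, fun t ht => ?_⟩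
  obtain ⟨⟨h1, h2⟩, h3⟩ := hT t ((le_max_left _ _).trans ht)
  have ht0 : 0 < t := by linarith
  have hte : 2 ≤ t * ε := by
    rw [← div_le_iff₀ hε]; exact (le_max_right _ _).trans ht
  rw [lt_div_iff₀ ht0] at h1
  rw [div_lt_iff₀ ht0] at h2
  constructor
  · intro x hx hx0
    exact (le_csSup (hRbdd t ht0.le) ⟨x, hx, hx0, rfl⟩).trans h2.le
  · obtain ⟨_, ⟨x, hx, hx0, rfl⟩, h4⟩ := exists_lt_of_lt_csSup (hRne t)
      (show sSup (R t) - 1 < sSup (R t) by linarith)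
    exact ⟨x, hx, hx0, by nlinarith⟩

end Growth

/-! ### Norms and infinitesimal growth rates -/

section Norms

variable {n : Type*} [Fintype n]

namespace IsNorm

variable {N : (n → ℝ) → ℝ} (hN : IsNorm N)
include hN

lemma neg (v : n → ℝ) : N (-v) = N v := by
  simpa using hN.smul (-1) v

lemma nonneg (v : n → ℝ) : 0 ≤ N v := by
  have h := hN.triangle v (-v)
  rw [add_neg_cancel, hN.neg, (hN.eq_zero_iff 0).2 rfl] at h
  linarith

lemma smul_of_nonneg {a : ℝ} (ha : 0 ≤ a) (v : n → ℝ) : N (a • v) = a * N v := by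
  rw [hN.smul, abs_of_nonneg ha]

lemma exists_le : ∃ C, 0 < C ∧ ∀ v, N v ≤ C * ‖v‖ := by
  classical
  have hsum : ∀ (s : Finset n) (f : n → n → ℝ), N (∑ i ∈ s, f i) ≤ ∑ i ∈ s, N (f i) := by
    intro s f
    induction s using Finset.induction_on with
    | empty => simp [(hN.eq_zero_iff 0).2 rfl]
    | insert a s ha ih =>
      rw [Finset.sum_insert ha, Finset.sum_insert ha]
      linarith [hN.triangle (f a) (∑ i ∈ s, f i)]
  refine ⟨1 + ∑ i, N (Pi.single i 1), by
    linarith [Finset.sum_nonneg fun (i : n) (_ : i ∈ Finset.univ) => hN.nonneg (Pi.single i 1)],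
    fun v => ?_⟩
  have h1 : v = ∑ i, v i • (Pi.single i 1 : n → ℝ) := by
    ext j
    simp [Finset.sum_apply, Pi.single_apply]
  calc N v = N (∑ i, v i • (Pi.single i 1 : n → ℝ)) := by rw [← h1]
    _ ≤ ∑ i, N (v i • (Pi.single i 1 : n → ℝ)) := hsum _ _
    _ ≤ ∑ i, ‖v‖ * N (Pi.single i 1) := by
      refine Finset.sum_le_sum fun i _ => ?_
      rw [hN.smul]
      exact mul_le_mul_of_nonneg_right (norm_le_pi_norm v i) (hN.nonneg _)
    _ ≤ _ := by
      rw [← Finset.mul_sum]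
      nlinarith [norm_nonneg v]

lemma abs_sub_le (a b : n → ℝ) : |N a - N b| ≤ N (a - b) := by
  rw [abs_sub_le_iff]
  constructor
  · have := hN.triangle (a - b) b
    rw [sub_add_cancel] at this
    linarith
  · have := hN.triangle (b - a) a
    rw [sub_add_cancel, ← neg_sub, hN.neg] at this
    linarith

lemma lipschitz : ∃ C, 0 < C ∧ ∀ a b, |N a - N b| ≤ C * ‖a - b‖ := by
  obtain ⟨C, hC, h⟩ := hN.exists_le
  exact ⟨C, hC, fun a b => (hN.abs_sub_le a b).trans (h _)⟩

lemma exists_ge : ∃ c, 0 < c ∧ ∀ v, c * ‖v‖ ≤ N v := by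
  obtain ⟨C, hC, h⟩ := hN.lipschitz
  have hcont : Continuous N := (LipschitzWith.of_dist_le_mul (K := C.toNNReal) fun a b => by
    rw [Real.dist_eq, dist_eq_norm, Real.coe_toNNReal _ hC.le]; exact h a b).continuous
  rcases (Metric.sphere (0 : n → ℝ) 1).eq_empty_or_nonempty with he | hne
  · refine ⟨1, one_pos, fun v => ?_⟩
    by_cases hv : v = 0
    · simp [hv, (hN.eq_zero_iff 0).2 rfl]
    · have : ‖v‖⁻¹ • v ∈ Metric.sphere (0 : n → ℝ) 1 := by
        simp [norm_smul, norm_ne_zero_iff.2 hv]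
      rw [he] at this
      exact this.elim
  · obtain ⟨w, hw, hmin⟩ := (isCompact_sphere (0 : n → ℝ) 1).exists_isMinOn hne hcont.continuousOn
    have hw0 : w ≠ 0 := by
      rintro rfl
      simp at hw
    refine ⟨N w, lt_of_le_of_ne (hN.nonneg w) fun h => hw0 ((hN.eq_zero_iff w).1 h.symm),
      fun v => ?_⟩
    by_cases hv : v = 0
    · simp [hv, (hN.eq_zero_iff 0).2 rfl]
    · have h1 : ‖v‖⁻¹ • v ∈ Metric.sphere (0 : n → ℝ) 1 := by
        simp [norm_smul, norm_ne_zero_iff.2 hv]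
      have h2 : N w ≤ N (‖v‖⁻¹ • v) := hmin h1
      rw [hN.smul_of_nonneg (by positivity), ← div_eq_inv_mul, le_div_iff₀ (norm_pos_iff.2 hv)] at h2
      exact h2

lemma exists_mulVec_le (B : Matrix n n ℝ) : ∃ K, 0 < K ∧ ∀ w, N (B.mulVec w) ≤ K * N w := by
  obtain ⟨C, hC, h1⟩ := hN.exists_le
  obtain ⟨c, hc, h2⟩ := hN.exists_ge
  set L := ∑ i, ∑ j, |B i j|
  have hL : ∀ i j, |B i j| ≤ L := fun i j =>
    (Finset.single_le_sum (f := fun j => |B i j|) (fun _ _ => abs_nonneg _) (Finset.mem_univ j)).trans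
    (Finset.single_le_sum (f := fun i => ∑ j, |B i j|)
      (fun _ _ => Finset.sum_nonneg fun _ _ => abs_nonneg _) (Finset.mem_univ i))
  have hL0 : 0 ≤ L := Finset.sum_nonneg fun _ _ => Finset.sum_nonneg fun _ _ => abs_nonneg _
  refine ⟨C * (Fintype.card n * L + 1) / c, by positivity, fun w => ?_⟩
  calc N (B.mulVec w) ≤ C * ‖B.mulVec w‖ := h1 _
    _ ≤ C * (Fintype.card n * L * ‖w‖) := by gcongr; exact norm_mulVec_le_of_entries hL w
    _ ≤ C * ((Fintype.card n * L + 1) * ‖w‖) := by gcongr; linarith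
    _ = C * (Fintype.card n * L + 1) / c * (c * ‖w‖) := by field_simp
    _ ≤ _ := by gcongr; exact h2 w

end IsNorm

/-- `HasRate p B r`: to first order in `h`, the map `1 + h B` increases `p` by a factor of at
most `1 + h r`, so `p` grows at exponential rate at most `r` along the flow of `B`. -/
def HasRate (p : (n → ℝ) → ℝ) (B : Matrix n n ℝ) (r : ℝ) : Prop :=
  ∀ w, ∃ K, ∀ h, 0 < h → h ≤ 1 → p (w + h • B.mulVec w) ≤ p w + h * (r * p w) + K * h ^ 2

lemma HasRate.comb {p : (n → ℝ) → ℝ} (hp : IsNorm p) {B₀ B₁ : Matrix n n ℝ} {r : ℝ}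
    (h₀ : HasRate p B₀ r) (h₁ : HasRate p B₁ r) {a b : ℝ} (ha : 0 ≤ a) (hb : 0 ≤ b)
    (hab : a + b ≤ 1) : HasRate p (a • B₀ + b • B₁) (r * (a + b)) := by
  intro w
  obtain ⟨K₀, hK₀⟩ := h₀ w
  obtain ⟨K₁, hK₁⟩ := h₁ w
  refine ⟨a * K₀ + b * K₁, fun h h0 h1 => ?_⟩
  have e : w + h • (a • B₀ + b • B₁).mulVec w =
      (1 - a - b) • w + (a • (w + h • B₀.mulVec w) + b • (w + h • B₁.mulVec w)) := by
    rw [Matrix.add_mulVec, Matrix.smul_mulVec, Matrix.smul_mulVec]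
    module
  have t1 := hp.triangle ((1 - a - b) • w) (a • (w + h • B₀.mulVec w) + b • (w + h • B₁.mulVec w))
  have t2 := hp.triangle (a • (w + h • B₀.mulVec w)) (b • (w + h • B₁.mulVec w))
  rw [← e, hp.smul_of_nonneg (by linarith)] at t1
  rw [hp.smul_of_nonneg ha, hp.smul_of_nonneg hb] at t2
  have m0 := mul_le_mul_of_nonneg_left (hK₀ h h0 h1) ha
  have m1 := mul_le_mul_of_nonneg_left (hK₁ h h0 h1) hb
  nlinarith

lemma exists_exp_le (m : ℝ) : ∃ K, 0 ≤ K ∧ ∀ h, 0 < h → h ≤ 1 →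
    Real.exp (m * h) ≤ 1 + m * h + K * h ^ 2 := by
  by_cases hm : m = 0
  · exact ⟨0, le_rfl, by simp [hm]⟩
  have hm2 : 0 < m ^ 2 := by positivity
  refine ⟨m ^ 2 * (Real.exp |m| + 1 + |m|), by positivity, fun h h0 h1 => ?_⟩
  by_cases hs : |m * h| ≤ 1
  · have h2 := (abs_le.1 (Real.abs_exp_sub_one_sub_id_le hs)).2
    have : 1 ≤ Real.exp |m| + 1 + |m| := by
      linarith [Real.exp_pos |m|, abs_nonneg m]
    nlinarith [mul_pos hm2 (pow_pos h0 2)]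
  · push Not at hs
    have h2 : 1 ≤ m ^ 2 * h ^ 2 := by
      rw [← mul_pow, ← sq_abs]
      nlinarith
    have h3 : |m * h| ≤ |m| := by
      rw [abs_mul, abs_of_pos h0]
      nlinarith [abs_nonneg m]
    have h4 : Real.exp (m * h) ≤ Real.exp |m| :=
      Real.exp_le_exp.2 ((le_abs_self _).trans h3)
    have h5 := neg_le_of_abs_le h3
    have h6 : 0 ≤ Real.exp |m| + 1 + |m| := by positivity
    nlinarith

/-- Differentiating the extremality inequality at time zero along constant switching laws. -/
lemma IsExtremalNorm.hasRate {S : Set (Matrix n n ℝ)} {L : ℝ} (hS : ∀ M ∈ S, ∀ i j, |M i j| ≤ L)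
    {N : (n → ℝ) → ℝ} (hN : IsExtremalNorm S N) {X : Matrix n n ℝ} (hX : X ∈ S) :
    HasRate N X (Lambda S) := by
  intro v
  set m := Lambda S
  obtain ⟨C, hC, hlip⟩ := hN.1.lipschitz
  obtain ⟨K, hK0, hK⟩ := exists_exp_le m
  have hL := hS X hX
  have hm : ∀ i j, Measurable fun _ : ℝ => X i j := fun i j => measurable_const
  obtain ⟨x, hx, hx0, hxi⟩ := exists_solution (A := fun _ => X) hm (fun _ _ => hL) v
  have hI := fun t (ht : (0:ℝ) ≤ t) =>
    intervalIntegrable_mulVec (A := fun _ => X) hm (fun _ _ => hL) hx ht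
  have htr : IsTrajectory S x := ⟨hx, fun _ => X, hm, fun _ _ => hX, hI, hxi⟩
  have hV := vdiff_of_integral hI hxi
  set M := |Fintype.card n * L|
  have hMv : ∀ y, ‖X.mulVec y‖ ≤ M * ‖y‖ := fun y =>
    (norm_mulVec_le_of_entries hL y).trans (by gcongr; exact le_abs_self _)
  set R := Real.exp M * ‖v‖
  have hR0 : 0 ≤ R := by positivity
  have hxb : ∀ s, 0 ≤ s → s ≤ 1 → ‖x s‖ ≤ R := by
    intro s h0 h1
    refine ((hV.norm_le_exp (fun _ _ => hL) le_rfl h0).1).trans ?_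
    rw [hx0, sub_zero]
    refine mul_le_mul_of_nonneg_right (Real.exp_le_exp.2 ?_) (norm_nonneg _)
    calc Fintype.card n * L * s ≤ M * s := by gcongr; exact le_abs_self _
      _ ≤ M := by nlinarith [abs_nonneg (Fintype.card n * L)]
  have hd1 : ∀ s, 0 ≤ s → s ≤ 1 → ‖x s - v‖ ≤ M * R * s := by
    intro s h0 h1
    rw [hxi s h0, hx0, add_sub_cancel_left]
    have := intervalIntegral.norm_integral_le_of_norm_le_const (a := 0) (b := s) (C := M * R)
      (f := fun r => X.mulVec (x r)) (fun r hr => by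
        rw [Set.uIoc_of_le h0] at hr
        exact (hMv _).trans (by gcongr; exact hxb r hr.1.le (hr.2.trans h1)))
    simpa [abs_of_nonneg h0] using this
  have hd2 : ∀ s, 0 ≤ s → s ≤ 1 → ‖v + s • X.mulVec v - x s‖ ≤ M * (M * R) * s ^ 2 := by
    intro s h0 h1
    have e : v + s • X.mulVec v - x s = ∫ r in (0:ℝ)..s, (X.mulVec v - X.mulVec (x r)) := by
      rw [intervalIntegral.integral_sub intervalIntegrable_const (hI s h0), hxi s h0, hx0,
        intervalIntegral.integral_const, sub_zero]
      abel
    rw [e]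
    have := intervalIntegral.norm_integral_le_of_norm_le_const (a := 0) (b := s)
      (C := M * (M * R * s)) (f := fun r => X.mulVec v - X.mulVec (x r)) (fun r hr => by
        rw [Set.uIoc_of_le h0] at hr
        rw [← Matrix.mulVec_sub]
        refine (hMv _).trans ?_
        rw [norm_sub_rev]
        gcongr
        refine (hd1 r hr.1.le (hr.2.trans h1)).trans ?_
        gcongr
        exact hr.2)
    rw [sub_zero, abs_of_nonneg h0] at this
    calc _ ≤ _ := this
      _ = _ := by ring
  refine ⟨C * (M * (M * R)) + K * N v, fun h h0 h1 => ?_⟩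
  have e1 := hN.2 x htr 0 h le_rfl h0.le
  rw [hx0, neg_zero, zero_mul, Real.exp_zero, one_mul, neg_mul, Real.exp_neg, mul_comm h,
    inv_mul_le_iff₀ (Real.exp_pos _)] at e1
  have e2 := (le_abs_self _).trans (hlip (v + h • X.mulVec v) (x h))
  have e3 := mul_le_mul_of_nonneg_left (hd2 h h0.le h1) hC.le
  have e4 := mul_le_mul_of_nonneg_right (hK h h0 h1) (hN.1.nonneg v)
  nlinarith

lemma exists_entry_bound {F : Set (Matrix n n ℝ)} (hF : F.Finite) :
    ∃ L, ∀ M ∈ convexHull ℝ F, ∀ i j, |M i j| ≤ L := by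
  obtain ⟨L, hL⟩ := (hF.image fun M : Matrix n n ℝ => ∑ i, ∑ j, |M i j|).bddAbove
  refine ⟨L, fun M hM => ?_⟩
  have hconv : Convex ℝ {M : Matrix n n ℝ | ∀ i j, |M i j| ≤ L} := by
    intro A hA B hB a b ha hb hab i j
    have h1 := hA i j
    have h2 := hB i j
    calc |(a • A + b • B) i j| = |a * A i j + b * B i j| := by simp
      _ ≤ |a * A i j| + |b * B i j| := abs_add_le _ _
      _ = a * |A i j| + b * |B i j| := by
        rw [abs_mul, abs_mul, abs_of_nonneg ha, abs_of_nonneg hb]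
      _ ≤ a * L + b * L := by gcongr
      _ = L := by rw [← add_mul, hab, one_mul]
  refine convexHull_min (fun A hA i j => ?_) hconv hM
  refine le_trans ?_ (hL ⟨A, hA, rfl⟩)
  exact (Finset.single_le_sum (f := fun j => |A i j|) (fun _ _ => abs_nonneg _)
    (Finset.mem_univ j)).trans (Finset.single_le_sum (f := fun i => ∑ j, |A i j|)
      (fun _ _ => Finset.sum_nonneg fun _ _ => abs_nonneg _) (Finset.mem_univ i))

end Norms

/-! ### The growth rate of a planar factor -/

section Rates

variable {n : Type*} [Fintype n]

lemma not_exp_le {a K T : ℝ} (ha : 0 < a) (h : ∀ t, T ≤ t → Real.exp (a * t) ≤ K) : False := by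
  have h1 := h (max T (K / a)) (le_max_left _ _)
  have h2 := Real.add_one_le_exp (a * max T (K / a))
  have h3 : K ≤ a * max T (K / a) := by
    rw [mul_comm, ← div_le_iff₀ ha]
    exact le_max_right _ _
  linarith

lemma IsTrajectory.ne_zero {S : Set (Matrix n n ℝ)} {L : ℝ} (hS : ∀ M ∈ S, ∀ i j, |M i j| ≤ L)
    {x : ℝ → n → ℝ} (hx : IsTrajectory S x) (hx0 : x 0 ≠ 0) {t : ℝ} (ht : 0 ≤ t) : x t ≠ 0 := by
  obtain ⟨A, -, hA, hv⟩ := hx.vdiff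
  intro h0
  have := (hv.norm_le_exp (fun s hs => hS _ (hA s hs)) le_rfl ht).2
  rw [h0, norm_zero, mul_zero] at this
  exact hx0 (norm_le_zero_iff.1 this)

/-- The factor `exp (-l t)` shifts the coefficients of a linear equation by `-l`. -/
lemma VDiff.exp_smul [DecidableEq n] {Y : ℝ → n → ℝ} {A : ℝ → Matrix n n ℝ}
    (h : VDiff Y fun s => (A s).mulVec (Y s)) (l : ℝ) :
    VDiff (fun t => Real.exp (-l * t) • Y t)
      (fun t => (A t - l • (1 : Matrix n n ℝ)).mulVec (Real.exp (-l * t) • Y t)) := by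
  intro i
  have h1 := ((ADiff.linear (-l)).exp).mul (h i)
  have e : (fun t => ((A t - l • (1 : Matrix n n ℝ)).mulVec (Real.exp (-l * t) • Y t)) i) =
      fun t => Real.exp (-l * t) * -l * Y t i + Real.exp (-l * t) * ((A t).mulVec (Y t)) i := by
    funext t
    rw [Matrix.mulVec_smul, Matrix.sub_mulVec, Matrix.smul_mulVec, Matrix.one_mulVec]
    simp only [Pi.smul_apply, Pi.sub_apply, smul_eq_mul]
    ring
  show ADiff (fun t => Real.exp (-l * t) * Y t i) _
  rw [e]
  exact h1

/-- Integrated form of `HasRate`: `p` grows along a solution at most like the exponential of a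
primitive of the infinitesimal rates. -/
lemma VDiff.rate_le {p : (n → ℝ) → ℝ} (hp : IsNorm p) {w : ℝ → n → ℝ} {A : ℝ → Matrix n n ℝ}
    (hw : VDiff w fun s => (A s).mulVec (w s)) {r α : ℝ → ℝ} (hα : ADiff α r)
    (hr : ∀ t, 0 < t → HasRate p (A t) (r t)) {s t : ℝ} (hs : 0 ≤ s) (hst : s ≤ t) :
    Real.exp (-α t) * p (w t) ≤ Real.exp (-α s) * p (w s) := by
  obtain ⟨C, -, hC⟩ := hp.lipschitz
  obtain ⟨φ', h1, h2⟩ := hw.comp_lipschitz hC (c := fun t => r t * p (w t))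
    (Eventually.of_forall fun t ht => hr t ht (w t))
  exact h1.gronwall hα h2 hs hst

lemma ADiff.of_bounded {θ : ℝ → ℝ} (hm : Measurable θ) (h0 : ∀ s, 0 ≤ s → 0 ≤ θ s)
    (h1 : ∀ s, 0 ≤ s → θ s ≤ 1) : ADiff (fun t => ∫ s in (0:ℝ)..t, θ s) θ := by
  refine ADiff.of_integral (fun T hT => ?_) (by simp)
  refine (intervalIntegrable_const (c := (1:ℝ))).mono_fun' hm.aestronglyMeasurable ?_
  rw [EventuallyLE, ae_restrict_iff' measurableSet_uIoc]
  refine Eventually.of_forall fun s hs => ?_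
  rw [Set.uIoc_of_le hT] at hs
  rw [Real.norm_of_nonneg (h0 s hs.1.le)]
  exact h1 s hs.1.le

variable [DecidableEq n] [Nonempty n]

/-- If both `C₀ - l` and `C₁ - l` have rate at most `r`, where `l` is the Lyapunov exponent of
`{C₀, C₁}`, then every trajectory of the system grows at rate at most `l + r`, which forces `r ≥ 0`. -/
lemma rate_nonneg {C₀ C₁ : Matrix n n ℝ} {p : (n → ℝ) → ℝ} (hp : IsNorm p) {l r : ℝ}
    (hl : l = Lambda (convexHull ℝ {C₀, C₁}))
    (h₀ : HasRate p (C₀ - l • (1 : Matrix n n ℝ)) r)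
    (h₁ : HasRate p (C₁ - l • (1 : Matrix n n ℝ)) r) : 0 ≤ r := by
  by_contra! hr
  obtain ⟨L, hL⟩ := exists_entry_bound (F := {C₀, C₁}) (Set.toFinite _)
  have hne : (convexHull ℝ ({C₀, C₁} : Set (Matrix n n ℝ))).Nonempty :=
    ⟨C₀, subset_convexHull _ _ (by simp)⟩
  obtain ⟨T, hT0, hT⟩ := Lambda_spec hL hne (ε := -r / 2) (by linarith)
  rw [← hl] at hT
  obtain ⟨C, hC, hCp⟩ := hp.exists_le
  obtain ⟨c, hc, hcp⟩ := hp.exists_ge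
  set k := Real.sqrt (Fintype.card n)
  refine not_exp_le (a := -r / 2) (K := k * C / c) (T := T) (by linarith) fun t ht => ?_
  have ht0 : 0 ≤ t := by linarith
  obtain ⟨Y, hY, hY0, hYt⟩ := (hT t ht).2
  have p0 := eNorm_pos hY0
  have pt := eNorm_pos (hY.ne_zero hL hY0 ht0)
  obtain ⟨A, -, hA, hV⟩ := hY.vdiff
  have h2 := (hV.exp_smul l).rate_le hp (ADiff.linear r) (fun s hs => by
    have h3 := hA s hs.le
    rw [convexHull_pair] at h3
    obtain ⟨a, b, ha, hb, hab, h4⟩ := h3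
    have h5 := HasRate.comb hp h₀ h₁ ha hb hab.le
    rw [hab, mul_one] at h5
    convert h5 using 1
    have h6 : l • (1 : Matrix n n ℝ) = a • l • 1 + b • l • 1 := by
      rw [← add_smul, hab, one_smul]
    rw [← h4, smul_sub, smul_sub]
    conv_lhs => rw [h6]
    abel) le_rfl ht0
  rw [hp.smul_of_nonneg (Real.exp_pos _).le, hp.smul_of_nonneg (Real.exp_pos _).le] at h2
  simp only [mul_zero, neg_zero, Real.exp_zero, one_mul] at h2
  rw [Real.le_log_iff_exp_le (by positivity), le_div_iff₀ p0] at hYt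
  rw [le_div_iff₀ hc]
  refine le_of_mul_le_mul_right ?_ p0
  have e1 : Real.exp (-r / 2 * t) = Real.exp (-(r * t)) * Real.exp (-l * t) *
      Real.exp ((l - -r / 2) * t) := by
    rw [← Real.exp_add, ← Real.exp_add]; ring_nf
  calc Real.exp (-r / 2 * t) * c * eNorm (Y 0)
      = Real.exp (-(r * t)) * Real.exp (-l * t) * c *
        (Real.exp ((l - -r / 2) * t) * eNorm (Y 0)) := by rw [e1]; ring
    _ ≤ Real.exp (-(r * t)) * Real.exp (-l * t) * c * (k * ‖Y t‖) := by
      exact mul_le_mul_of_nonneg_left (hYt.trans (eNorm_le_norm _)) (by positivity)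
    _ = Real.exp (-(r * t)) * Real.exp (-l * t) * k * (c * ‖Y t‖) := by ring
    _ ≤ Real.exp (-(r * t)) * Real.exp (-l * t) * k * p (Y t) := by gcongr; exact hcp _
    _ = k * (Real.exp (-(r * t)) * (Real.exp (-l * t) * p (Y t))) := by ring
    _ ≤ k * (C * eNorm (Y 0)) := by
      refine mul_le_mul_of_nonneg_left (h2.trans ((hCp _).trans ?_)) (Real.sqrt_nonneg _)
      exact mul_le_mul_of_nonneg_left (norm_le_eNorm _) hC.le
    _ = _ := by ring

/-- If a solution of `w' = (θ₀ (C₀ - l) + θ₁ (C₁ - l)) w` with `θ₀ + θ₁ ≤ 1` grows at the full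
rate `r > 0`, then `1 - θ₀ - θ₁` is integrable. From some time on `w` therefore stays, up to half of
the guaranteed growth `c exp (r t)`, close to a trajectory of the system `{C₀ - l, C₁ - l}`, whose
exponent is zero; this is a contradiction, so `r ≤ 0`. -/
lemma rate_nonpos {C₀ C₁ : Matrix n n ℝ} {p : (n → ℝ) → ℝ} (hp : IsNorm p) {l r : ℝ}
    (hl : l = Lambda (convexHull ℝ {C₀, C₁}))
    (h₀ : HasRate p (C₀ - l • (1 : Matrix n n ℝ)) r)
    (h₁ : HasRate p (C₁ - l • (1 : Matrix n n ℝ)) r)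
    {θ₀ θ₁ θ₂ : ℝ → ℝ} (hm₁ : Measurable θ₁) (hm₂ : Measurable θ₂)
    (hθ₀ : ∀ s, 0 ≤ s → 0 ≤ θ₀ s) (hθ₁ : ∀ s, 0 ≤ s → 0 ≤ θ₁ s) (hθ₂ : ∀ s, 0 ≤ s → 0 ≤ θ₂ s)
    (hθ : ∀ s, 0 ≤ s → θ₀ s + θ₁ s + θ₂ s = 1) {w : ℝ → n → ℝ}
    (hw : VDiff w fun s => (θ₀ s • (C₀ - l • (1 : Matrix n n ℝ)) +
      θ₁ s • (C₁ - l • (1 : Matrix n n ℝ))).mulVec (w s))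
    {c : ℝ} (hc : 0 < c) (hwc : ∀ t, 0 ≤ t → c * Real.exp (r * t) ≤ p (w t)) : r ≤ 0 := by
  by_contra! hr
  obtain ⟨L, hL⟩ := exists_entry_bound (F := {C₀, C₁}) (Set.toFinite _)
  have hne : (convexHull ℝ ({C₀, C₁} : Set (Matrix n n ℝ))).Nonempty :=
    ⟨C₀, subset_convexHull _ _ (by simp)⟩
  set B₀ := C₀ - l • (1 : Matrix n n ℝ) with hB₀
  set B₁ := C₁ - l • (1 : Matrix n n ℝ) with hB₁
  set α : ℝ → ℝ := fun t => ∫ s in (0:ℝ)..t, θ₂ s with hαdef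
  have hα : ADiff α θ₂ := ADiff.of_bounded hm₂ hθ₂ fun s hs => by
    linarith [hθ s hs, hθ₀ s hs, hθ₁ s hs]
  have hα0 : α 0 = 0 := by simp [hαdef]
  have hαmono : ∀ s t, 0 ≤ s → s ≤ t → α s ≤ α t := by
    intro s t hs hst
    have := (hα.const_mul (-1)).antitone (Eventually.of_forall fun t ht => by
      linarith [hθ₂ t ht.le]) hs hst
    linarith
  -- the loss of growth is measured by the time `α` spent off the two rotations
  have hup : ∀ t, 0 ≤ t → p (w t) ≤ Real.exp (r * t - r * α t) * p (w 0) := by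
    intro t ht
    have h := hw.rate_le hp ((ADiff.linear r).sub (hα.const_mul r)) (fun s hs => by
      have h5 := HasRate.comb hp h₀ h₁ (hθ₀ s hs.le) (hθ₁ s hs.le)
        (by linarith [hθ s hs.le, hθ₂ s hs.le])
      convert h5 using 1
      linear_combination -r * hθ s hs.le) le_rfl ht
    simp only [mul_zero, hα0, sub_zero, neg_zero, Real.exp_zero, one_mul] at h
    rwa [Real.exp_neg, inv_mul_le_iff₀ (Real.exp_pos _)] at h
  have hw0 : 0 < p (w 0) := by
    have := hwc 0 le_rfl
    rw [mul_zero, Real.exp_zero] at this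
    linarith
  have hαb : ∀ t, 0 ≤ t → α t ≤ p (w 0) / c / r := by
    intro t ht
    have h1 := (hwc t ht).trans (hup t ht)
    rw [sub_eq_add_neg, Real.exp_add, Real.exp_neg] at h1
    have h2 : c * Real.exp (r * α t) ≤ p (w 0) := by
      have e1 := Real.exp_pos (r * t)
      have e2 := Real.exp_pos (r * α t)
      have : c * Real.exp (r * t) * Real.exp (r * α t) ≤ Real.exp (r * t) * p (w 0) := by
        calc _ ≤ _ := mul_le_mul_of_nonneg_right h1 e2.le
          _ = _ := by field_simp
      refine le_of_mul_le_mul_left ?_ e1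
      linarith
    rw [le_div_iff₀ hr, le_div_iff₀ hc]
    nlinarith [Real.add_one_le_exp (r * α t)]
  obtain ⟨K, hK, hKp⟩ := hp.exists_mulVec_le B₀
  set δ := c / (2 * (K * p (w 0))) with hδ
  have hδ0 : 0 < δ := by positivity
  obtain ⟨T, hT0, hT⟩ : ∃ T, 0 ≤ T ∧ ∀ t, 0 ≤ t → α t ≤ α T + δ := by
    have hb : BddAbove (α '' Set.Ici 0) := ⟨_, by rintro _ ⟨t, ht, rfl⟩; exact hαb t ht⟩
    obtain ⟨_, ⟨T, hT0, rfl⟩, hT⟩ := exists_lt_of_lt_csSup (s := α '' Set.Ici 0)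
      ⟨_, 0, Set.self_mem_Ici, rfl⟩ (sub_lt_self _ hδ0)
    refine ⟨T, hT0, fun t ht => ?_⟩
    have := le_csSup hb ⟨t, ht, rfl⟩
    linarith
  -- from time `T` on, compare `w` with the trajectory `Y` of the reduced system
  obtain ⟨Y, hY, hY0, hYV⟩ := exists_trajectory hL
    (A := fun s => (1 - θ₁ (T + s)) • C₀ + θ₁ (T + s) • C₁) (fun i j => by
      have h1 : Measurable fun s => θ₁ (T + s) := hm₁.comp (measurable_const_add T)
      simp only [Matrix.add_apply, Matrix.smul_apply, smul_eq_mul]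
      exact ((measurable_const.sub h1).mul_const _).add (h1.mul_const _)) (fun s hs => by
      have hTs : 0 ≤ T + s := by linarith
      rw [convexHull_pair]
      exact ⟨_, _, by linarith [hθ _ hTs, hθ₀ _ hTs, hθ₂ _ hTs], hθ₁ _ hTs, by ring, rfl⟩) (w T)
  have hwT : w T ≠ 0 := by
    intro h
    have := hwc T hT0
    rw [h, (hp.eq_zero_iff 0).2 rfl] at this
    have := Real.exp_pos (r * T)
    nlinarith
  set Z : ℝ → n → ℝ := fun t => Real.exp (-l * t) • Y t with hZ
  have hZV := hYV.exp_smul l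
  have hD := hZV.sub (hw.shift hT0)
  have hdist : ∀ s, 0 ≤ s →
      Real.exp (-(r * s)) * p (Z s - w (T + s)) ≤ c / 2 * Real.exp (r * T) := by
    obtain ⟨C, -, hC⟩ := hp.lipschitz
    obtain ⟨φ', hφ, hφ'⟩ := hD.comp_lipschitz hC
      (c := fun s => r * p (Z s - w (T + s)) + θ₂ (T + s) * (K * p (w (T + s))))
      (Eventually.of_forall fun s hs => by
        have hTs : 0 ≤ T + s := by linarith
        have h5 := HasRate.comb hp h₀ h₁ (a := 1 - θ₁ (T + s)) (b := θ₁ (T + s))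
          (by linarith [hθ _ hTs, hθ₀ _ hTs, hθ₂ _ hTs]) (hθ₁ _ hTs) (by linarith)
        rw [sub_add_cancel, mul_one] at h5
        obtain ⟨K', hK'⟩ := h5 (Z s - w (T + s))
        refine ⟨K', fun h h0 h1 => ?_⟩
        have e : (((1 - θ₁ (T + s)) • C₀ + θ₁ (T + s) • C₁) - l • (1 : Matrix n n ℝ)).mulVec (Z s) -
            (θ₀ (T + s) • B₀ + θ₁ (T + s) • B₁).mulVec (w (T + s)) =
            ((1 - θ₁ (T + s)) • B₀ + θ₁ (T + s) • B₁).mulVec (Z s - w (T + s)) +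
              θ₂ (T + s) • B₀.mulVec (w (T + s)) := by
          have e1 : ((1 - θ₁ (T + s)) • C₀ + θ₁ (T + s) • C₁) - l • (1 : Matrix n n ℝ) =
              (1 - θ₁ (T + s)) • B₀ + θ₁ (T + s) • B₁ := by
            rw [hB₀, hB₁]; module
          have e2 : θ₀ (T + s) = 1 - θ₁ (T + s) - θ₂ (T + s) := by linarith [hθ _ hTs]
          rw [e1, e2, Matrix.mulVec_sub]
          simp only [Matrix.add_mulVec, Matrix.smul_mulVec]
          module
        have h2 := hp.triangle (Z s - w (T + s) + h •
          ((1 - θ₁ (T + s)) • B₀ + θ₁ (T + s) • B₁).mulVec (Z s - w (T + s)))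
          ((h * θ₂ (T + s)) • B₀.mulVec (w (T + s)))
        rw [hp.smul_of_nonneg (mul_nonneg h0.le (hθ₂ _ hTs))] at h2
        have h3 := mul_le_mul_of_nonneg_left (hKp (w (T + s))) (mul_nonneg h0.le (hθ₂ _ hTs))
        have h4 := hK' h h0 h1
        show p (Z s - w (T + s) + h •
          ((((1 - θ₁ (T + s)) • C₀ + θ₁ (T + s) • C₁) - l • (1 : Matrix n n ℝ)).mulVec (Z s) -
            (θ₀ (T + s) • B₀ + θ₁ (T + s) • B₁).mulVec (w (T + s)))) ≤ _
        rw [e, smul_add, smul_smul, ← add_assoc]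
        show _ ≤ p (Z s - w (T + s)) + _ + _
        linarith)
    intro s hs
    have hG := (((ADiff.linear (-r)).exp.mul hφ).sub
      ((hα.shift hT0).const_mul (K * (Real.exp (r * T) * p (w 0))))).antitone (by
        filter_upwards [hφ'] with s h hs
        have hTs : 0 ≤ T + s := by linarith
        have h := h hs
        have h6 : p (w (T + s)) ≤ Real.exp (r * T) * Real.exp (r * s) * p (w 0) := by
          refine (hup _ hTs).trans ?_
          rw [← Real.exp_add]
          refine mul_le_mul_of_nonneg_right (Real.exp_le_exp.2 ?_) hw0.le
          have := hαmono 0 (T + s) le_rfl hTs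
          rw [hα0] at this
          nlinarith
        have h7 := mul_le_mul_of_nonneg_left h6 (mul_nonneg (hθ₂ _ hTs) hK.le)
        have h8 : Real.exp (-r * s) * Real.exp (r * s) = 1 := by
          rw [← Real.exp_add]; simp
        have h9 : φ' s - r * p (Z s - w (T + s)) ≤
            θ₂ (T + s) * K * (Real.exp (r * T) * Real.exp (r * s) * p (w 0)) := by
          linarith
        have h10 := mul_le_mul_of_nonneg_left h9 (Real.exp_pos (-r * s)).le
        have h11 : Real.exp (-r * s) *
            (θ₂ (T + s) * K * (Real.exp (r * T) * Real.exp (r * s) * p (w 0))) =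
            K * (Real.exp (r * T) * p (w 0)) * θ₂ (T + s) := by
          linear_combination (θ₂ (T + s) * K * Real.exp (r * T) * p (w 0)) * h8
        linarith) le_rfl hs
    have hz : p (Z 0 - w (T + 0)) = 0 := (hp.eq_zero_iff _).2 (by simp [hZ, hY0])
    replace hG : Real.exp (-r * s) * p (Z s - w (T + s)) -
        K * (Real.exp (r * T) * p (w 0)) * α (T + s) ≤
        Real.exp (-r * 0) * p (Z 0 - w (T + 0)) -
        K * (Real.exp (r * T) * p (w 0)) * α (T + 0) := hG
    rw [hz, mul_zero, add_zero, zero_sub] at hG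
    have h12 := hT (T + s) (by linarith)
    have h13 : K * (Real.exp (r * T) * p (w 0)) * δ = c / 2 * Real.exp (r * T) := by
      rw [hδ]; field_simp
    have h14 : 0 ≤ K * (Real.exp (r * T) * p (w 0)) := by positivity
    have h15 : -(r * s) = -r * s := by ring
    rw [h15]
    nlinarith
  obtain ⟨T', hT'0, hT'⟩ := Lambda_spec hL hne (ε := r / 2) (by linarith)
  rw [← hl] at hT'
  obtain ⟨C, hC, hCp⟩ := hp.exists_le
  refine not_exp_le (a := r / 2) (K := C * eNorm (Y 0) / (c / 2 * Real.exp (r * T))) (T := T')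
    (by linarith) fun t ht => ?_
  have ht0 : 0 ≤ t := by linarith
  have hY0' : Y 0 ≠ 0 := by rwa [hY0]
  have p0 := eNorm_pos hY0'
  have pt := eNorm_pos (hY.ne_zero hL hY0' ht0)
  have h1 := (hT' t ht).1 Y hY hY0'
  rw [Real.log_le_iff_le_exp (by positivity), div_le_iff₀ p0] at h1
  have h2 : p (Z t) ≤ C * (Real.exp (r / 2 * t) * eNorm (Y 0)) := by
    calc p (Z t) = Real.exp (-l * t) * p (Y t) := hp.smul_of_nonneg (Real.exp_pos _).le _
      _ ≤ Real.exp (-l * t) * (C * (Real.exp ((l + r / 2) * t) * eNorm (Y 0))) := by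
        gcongr
        exact (hCp _).trans (by gcongr; exact (norm_le_eNorm _).trans h1)
      _ = C * ((Real.exp (-l * t) * Real.exp ((l + r / 2) * t)) * eNorm (Y 0)) := by ring
      _ = _ := by rw [← Real.exp_add]; ring_nf
  have h3 := hdist t ht0
  rw [Real.exp_neg, inv_mul_le_iff₀ (Real.exp_pos _)] at h3
  have h4 := (abs_le.1 (hp.abs_sub_le (Z t) (w (T + t)))).1
  have h5 := hwc (T + t) (by linarith)
  rw [mul_add, Real.exp_add] at h5
  have h6 : Real.exp (r * t) = Real.exp (r / 2 * t) * Real.exp (r / 2 * t) := by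
    rw [← Real.exp_add]; ring_nf
  rw [le_div_iff₀ (by positivity)]
  have h7 : Real.exp (r / 2 * t) * (Real.exp (r / 2 * t) * (c / 2 * Real.exp (r * T))) ≤
      Real.exp (r / 2 * t) * (C * eNorm (Y 0)) := by
    rw [← mul_assoc, ← h6]
    linarith
  exact le_of_mul_le_mul_left h7 (Real.exp_pos _)

end Rates

/-! ### Product trajectories -/

section Product

lemma ADiff.congr {x g g' : ℝ → ℝ} (h : ADiff x g) (hg : ∀ t, 0 < t → g t = g' t) : ADiff x g' where
  ac := h.ac
  deriv := by
    filter_upwards [h.deriv] with t h1 ht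
    rw [← hg t ht]
    exact h1 ht

/-- Solutions exist for coefficients moving in the convex hull of `0`, `P` and `Q`. -/
lemma exists_vdiff_solution {n : Type*} [Fintype n] (P Q : Matrix n n ℝ) {a b : ℝ → ℝ}
    (ham : Measurable a) (hbm : Measurable b) (ha : ∀ s, 0 ≤ s → 0 ≤ a s)
    (hb : ∀ s, 0 ≤ s → 0 ≤ b s) (hab : ∀ s, 0 ≤ s → a s + b s ≤ 1) (v : n → ℝ) :
    ∃ u : ℝ → n → ℝ, u 0 = v ∧ VDiff u fun s => (a s • P + b s • Q).mulVec (u s) := by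
  obtain ⟨L, hL⟩ := exists_entry_bound (F := {0, P, Q}) (Set.toFinite _)
  have hc := convex_convexHull ℝ ({0, P, Q} : Set (Matrix n n ℝ))
  obtain ⟨u, -, h0, hV⟩ := exists_trajectory hL (A := fun s => a s • P + b s • Q)
    (fun i j => by
      simp only [Matrix.add_apply, Matrix.smul_apply, smul_eq_mul]
      exact (ham.mul_const _).add (hbm.mul_const _))
    (fun s hs => by
      have h1 := ha s hs
      have h2 := hb s hs
      have h3 := hab s hs
      rw [convexHull_insert (by simp), convexHull_pair]
      simp only [convexJoin_singleton_left, Set.mem_iUnion]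
      by_cases hz : a s + b s = 0
      · have ha0 : a s = 0 := by linarith
        have hb0 : b s = 0 := by linarith
        exact ⟨P, left_mem_segment ℝ P Q, by simpa [ha0, hb0] using left_mem_segment ℝ 0 P⟩
      · have hp : 0 < a s + b s := lt_of_le_of_ne (by linarith) (Ne.symm hz)
        refine ⟨(a s / (a s + b s)) • P + (b s / (a s + b s)) • Q,
          ⟨_, _, by positivity, by positivity, by field_simp, rfl⟩,
          ⟨1 - (a s + b s), a s + b s, by linarith, hp.le, by ring, ?_⟩⟩
        rw [smul_zero, zero_add, smul_add, smul_smul, smul_smul, mul_div_cancel₀ _ hz,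
          mul_div_cancel₀ _ hz]) v
  exact ⟨u, h0, hV⟩

lemma kronecker_mulVec_vecKron (A B : Matrix (Fin 2) (Fin 2) ℝ) (u v : Fin 2 → ℝ) :
    (A ⊗ₖ B).mulVec (vecKron u v) = vecKron (A.mulVec u) (B.mulVec v) := by
  ext ⟨i, j⟩
  simp only [Matrix.mulVec, dotProduct, vecKron, Fintype.sum_prod_type, Fin.sum_univ_two,
    Matrix.kroneckerMap_apply]
  ring

lemma vecKron_add_left (u u' v : Fin 2 → ℝ) :
    vecKron (u + u') v = vecKron u v + vecKron u' v := by
  ext ⟨i, j⟩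
  simp [vecKron, add_mul]

lemma vecKron_add_right (u v v' : Fin 2 → ℝ) :
    vecKron u (v + v') = vecKron u v + vecKron u v' := by
  ext ⟨i, j⟩
  simp [vecKron, mul_add]

lemma vecKron_smul_left (a : ℝ) (u v : Fin 2 → ℝ) : vecKron (a • u) v = a • vecKron u v := by
  ext ⟨i, j⟩
  simp [vecKron, mul_assoc]

lemma vecKron_smul_right (a : ℝ) (u v : Fin 2 → ℝ) : vecKron u (a • v) = a • vecKron u v := by
  ext ⟨i, j⟩
  simp [vecKron, mul_left_comm]

/-- The matrix `A₀` of the damping factor. -/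
def matA₀ : Matrix (Fin 2) (Fin 2) ℝ := !![0, 0; 0, -1]

/-- The matrix `A₁` of the damping factor. -/
def matA₁ : Matrix (Fin 2) (Fin 2) ℝ := !![-1, 1; -1, -1]

/-- The first elliptic rotation, so that `B₀ = matC₀ - λ`. -/
noncomputable def matC₀ : Matrix (Fin 2) (Fin 2) ℝ := !![0, -2; 1/2, 0]

/-- The second elliptic rotation, so that `B₁ = matC₁ - λ`. -/
noncomputable def matC₁ : Matrix (Fin 2) (Fin 2) ℝ := !![0, -1/2; 2, 0]

/-- The generator acting as the damping `matA₀` on the first factor and as `C - l` on the second. -/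
noncomputable def matX (l : ℝ) (C : Matrix (Fin 2) (Fin 2) ℝ) : Matrix (Fin 2 × Fin 2) (Fin 2 × Fin 2) ℝ :=
  matA₀ ⊗ₖ (1 : Matrix (Fin 2) (Fin 2) ℝ) +
    (1 : Matrix (Fin 2) (Fin 2) ℝ) ⊗ₖ (C - l • (1 : Matrix (Fin 2) (Fin 2) ℝ))

/-- The system `{X₀, X₁, X₂}` before taking the convex hull. -/
noncomputable def sysX (l : ℝ) : Set (Matrix (Fin 2 × Fin 2) (Fin 2 × Fin 2) ℝ) :=
  {matX l matC₀, matX l matC₁, matA₁ ⊗ₖ (1 : Matrix (Fin 2) (Fin 2) ℝ)}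

lemma matX_mulVec (l : ℝ) (C : Matrix (Fin 2) (Fin 2) ℝ) (u v : Fin 2 → ℝ) :
    (matX l C).mulVec (vecKron u v) = vecKron (matA₀.mulVec u) v +
      vecKron u ((C - l • (1 : Matrix (Fin 2) (Fin 2) ℝ)).mulVec v) := by
  rw [matX, Matrix.add_mulVec, kronecker_mulVec_vecKron, kronecker_mulVec_vecKron,
    Matrix.one_mulVec, Matrix.one_mulVec]

/-- The barycentric coordinates of a switching law can be read off from two of its entries, so
they are measurable. -/
lemma exists_weights {l : ℝ} {A : ℝ → Matrix (Fin 2 × Fin 2) (Fin 2 × Fin 2) ℝ}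
    (hm : ∀ i j, Measurable fun s => A s i j) (hA : ∀ s, 0 ≤ s → A s ∈ convexHull ℝ (sysX l)) :
    ∃ θ₀ θ₁ θ₂ : ℝ → ℝ, Measurable θ₀ ∧ Measurable θ₁ ∧ Measurable θ₂ ∧
      (∀ s, 0 ≤ s → 0 ≤ θ₀ s) ∧ (∀ s, 0 ≤ s → 0 ≤ θ₁ s) ∧ (∀ s, 0 ≤ s → 0 ≤ θ₂ s) ∧
      (∀ s, 0 ≤ s → θ₀ s + θ₁ s + θ₂ s = 1) ∧
      ∀ s, 0 ≤ s → A s = θ₀ s • matX l matC₀ + θ₁ s • matX l matC₁ +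
        θ₂ s • (matA₁ ⊗ₖ (1 : Matrix (Fin 2) (Fin 2) ℝ)) := by
  set e : ℝ → ℝ := fun s => A s (0, 0) (0, 1)
  set θ₂ : ℝ → ℝ := fun s => A s (0, 0) (1, 0)
  set θ₁ : ℝ → ℝ := fun s => 2 / 3 * (e s + 2 - 2 * θ₂ s)
  have he : Measurable e := hm _ _
  have h2 : Measurable θ₂ := hm _ _
  have h1 : Measurable θ₁ := by fun_prop
  have key : ∀ s, 0 ≤ s → 0 ≤ 1 - θ₁ s - θ₂ s ∧ 0 ≤ θ₁ s ∧ 0 ≤ θ₂ s ∧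
      A s = (1 - θ₁ s - θ₂ s) • matX l matC₀ + θ₁ s • matX l matC₁ +
        θ₂ s • (matA₁ ⊗ₖ (1 : Matrix (Fin 2) (Fin 2) ℝ)) := by
    intro s hs
    have h := hA s hs
    rw [sysX, convexHull_insert (by simp), convexHull_pair] at h
    simp only [convexJoin_singleton_left, Set.mem_iUnion] at h
    obtain ⟨Y, ⟨c, d, hc, hd, hcd, rfl⟩, a, b, ha, hb, hab, hAs⟩ := h
    have e2 : θ₂ s = b * d := by
      simp [θ₂, ← hAs, matX, matA₀, matA₁, Matrix.kroneckerMap_apply]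
    have ee : e s = -2 * a - 1 / 2 * (b * c) := by
      simp [e, ← hAs, matX, matA₀, matA₁, matC₀, matC₁, Matrix.kroneckerMap_apply]
      ring
    have e1 : θ₁ s = b * c := by
      simp only [θ₁, ee, e2]
      linear_combination (4 / 3) * (-hab) + (4 / 3) * b * (-hcd)
    have e0 : 1 - θ₁ s - θ₂ s = a := by
      rw [e1, e2]
      linear_combination -hab - b * hcd
    rw [e0, e1, e2, ← hAs]
    refine ⟨ha, by positivity, by positivity, ?_⟩
    module
  exact ⟨fun s => 1 - θ₁ s - θ₂ s, θ₁, θ₂, by fun_prop, h1, h2, fun s hs => (key s hs).1,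
    fun s hs => (key s hs).2.1, fun s hs => (key s hs).2.2.1, fun s _ => by ring,
    fun s hs => (key s hs).2.2.2⟩

/-- A trajectory issued from a product vector stays a product: the two factors are driven by the
same barycentric weights. -/
lemma exists_factors {l : ℝ} {x : ℝ → Fin 2 × Fin 2 → ℝ}
    (hx : IsTrajectory (convexHull ℝ (sysX l)) x) {u₀ v₀ : Fin 2 → ℝ} (hx0 : x 0 = vecKron u₀ v₀) :
    ∃ (θ₀ θ₁ θ₂ : ℝ → ℝ) (u w : ℝ → Fin 2 → ℝ),
      Measurable θ₁ ∧ Measurable θ₂ ∧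
      (∀ s, 0 ≤ s → 0 ≤ θ₀ s) ∧ (∀ s, 0 ≤ s → 0 ≤ θ₁ s) ∧ (∀ s, 0 ≤ s → 0 ≤ θ₂ s) ∧
      (∀ s, 0 ≤ s → θ₀ s + θ₁ s + θ₂ s = 1) ∧ u 0 = u₀ ∧ w 0 = v₀ ∧
      (VDiff u fun s => ((θ₀ s + θ₁ s) • matA₀ + θ₂ s • matA₁).mulVec (u s)) ∧
      (VDiff w fun s => (θ₀ s • (matC₀ - l • (1 : Matrix (Fin 2) (Fin 2) ℝ)) +
        θ₁ s • (matC₁ - l • (1 : Matrix (Fin 2) (Fin 2) ℝ))).mulVec (w s)) ∧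
      ∀ t, 0 ≤ t → x t = vecKron (u t) (w t) := by
  obtain ⟨A, hm, hA, hV⟩ := hx.vdiff
  obtain ⟨θ₀, θ₁, θ₂, m0, m1, m2, p0, p1, p2, hsum, hAs⟩ := exists_weights hm hA
  obtain ⟨u, hu0, hu⟩ := exists_vdiff_solution matA₀ matA₁ (m0.add m1) m2
    (fun s hs => add_nonneg (p0 s hs) (p1 s hs)) p2 (fun s hs => (hsum s hs).le) u₀
  obtain ⟨w, hw0, hw⟩ := exists_vdiff_solution (matC₀ - l • (1 : Matrix (Fin 2) (Fin 2) ℝ))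
    (matC₁ - l • (1 : Matrix (Fin 2) (Fin 2) ℝ)) m0 m1 p0 p1
    (fun s hs => by linarith [hsum s hs, p2 s hs]) v₀
  refine ⟨θ₀, θ₁, θ₂, u, w, m1, m2, p0, p1, p2, hsum, hu0, hw0, hu, hw, fun t ht => ?_⟩
  obtain ⟨L, hL⟩ := exists_entry_bound (F := sysX l) (by unfold sysX; exact Set.toFinite _)
  have hd : VDiff (fun t => x t - vecKron (u t) (w t))
      (fun s => (A s).mulVec (x s - vecKron (u s) (w s))) := by
    rintro ⟨i, j⟩
    refine ((hV (i, j)).sub ((hu i).mul (hw j))).congr fun s hs => ?_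
    have e : (A s).mulVec (vecKron (u s) (w s)) =
        vecKron (((θ₀ s + θ₁ s) • matA₀ + θ₂ s • matA₁).mulVec (u s)) (w s) +
        vecKron (u s) ((θ₀ s • (matC₀ - l • (1 : Matrix (Fin 2) (Fin 2) ℝ)) +
          θ₁ s • (matC₁ - l • (1 : Matrix (Fin 2) (Fin 2) ℝ))).mulVec (w s)) := by
      rw [hAs s hs.le]
      simp only [Matrix.add_mulVec, Matrix.smul_mulVec, matX_mulVec, kronecker_mulVec_vecKron,
        Matrix.one_mulVec, vecKron_add_left, vecKron_add_right, vecKron_smul_left,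
        vecKron_smul_right]
      module
    show (A s).mulVec (x s) (i, j) - _ = ((A s).mulVec (x s - vecKron (u s) (w s))) (i, j)
    rw [Matrix.mulVec_sub, e]
    rfl
  have h := (hd.norm_le_exp (fun s hs => hL _ (hA s hs)) le_rfl ht).1
  rw [hx0, hu0, hw0, sub_self, norm_zero, mul_zero] at h
  exact sub_eq_zero.1 (norm_le_zero_iff.1 h)

/-- The sup norm of the damped factor does not increase. -/
lemma damped_norm_le {θ₀ θ₂ : ℝ → ℝ} (p0 : ∀ s, 0 ≤ s → 0 ≤ θ₀ s) (p2 : ∀ s, 0 ≤ s → 0 ≤ θ₂ s)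
    (hsum : ∀ s, 0 ≤ s → θ₀ s + θ₂ s = 1) {u : ℝ → Fin 2 → ℝ}
    (hu : VDiff u fun s => (θ₀ s • matA₀ + θ₂ s • matA₁).mulVec (u s)) {t : ℝ} (ht : 0 ≤ t) :
    ‖u t‖ ≤ ‖u 0‖ := by
  have hN : IsNorm fun v : Fin 2 → ℝ => ‖v‖ :=
    ⟨fun v => norm_eq_zero, fun a v => by rw [norm_smul, Real.norm_eq_abs], norm_add_le⟩
  have hr0 : HasRate (fun v : Fin 2 → ℝ => ‖v‖) matA₀ 0 := by
    refine fun v => ⟨0, fun h h0 h1 => ?_⟩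
    have a0 := abs_le.1 (norm_le_pi_norm v 0)
    have a1 := abs_le.1 (norm_le_pi_norm v 1)
    rw [zero_mul, mul_zero, add_zero, zero_mul, add_zero]
    refine (pi_norm_le_iff_of_nonneg (norm_nonneg _)).2 fun i => ?_
    rw [Real.norm_eq_abs, abs_le]
    fin_cases i <;> simp [matA₀, dotProduct, Fin.sum_univ_two]
    · exact a0
    · constructor <;> nlinarith
  have hr1 : HasRate (fun v : Fin 2 → ℝ => ‖v‖) matA₁ 0 := by
    refine fun v => ⟨0, fun h h0 h1 => ?_⟩
    have a0 := abs_le.1 (norm_le_pi_norm v 0)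
    have a1 := abs_le.1 (norm_le_pi_norm v 1)
    rw [zero_mul, mul_zero, add_zero, zero_mul, add_zero]
    refine (pi_norm_le_iff_of_nonneg (norm_nonneg _)).2 fun i => ?_
    rw [Real.norm_eq_abs, abs_le]
    fin_cases i <;> simp [matA₁, dotProduct, Fin.sum_univ_two]
    · constructor <;> nlinarith
    · constructor <;> nlinarith
  have h := hu.rate_le hN (ADiff.linear 0) (fun s hs => by
    have h1 := HasRate.comb hN hr0 hr1 (p0 s hs.le) (p2 s hs.le) (hsum s hs.le).le
    rwa [zero_mul] at h1) le_rfl ht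
  simpa using h

/-- The energy `u₁² + u₂²` decays at rate at least `2 u₂²`, so `u₂` comes arbitrarily close to
zero. -/
lemma damped_exists_small {θ₀ θ₂ : ℝ → ℝ} (p2 : ∀ s, 0 ≤ s → 0 ≤ θ₂ s)
    (hsum : ∀ s, 0 ≤ s → θ₀ s + θ₂ s = 1) {u : ℝ → Fin 2 → ℝ}
    (hu : VDiff u fun s => (θ₀ s • matA₀ + θ₂ s • matA₁).mulVec (u s)) {δ : ℝ} (hδ : 0 < δ) :
    ∃ t, 0 ≤ t ∧ |u t 1| < δ := by
  by_contra! hcon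
  have hE : ∀ t, 0 ≤ t →
      u t 0 * u t 0 + u t 1 * u t 1 + 2 * δ ^ 2 * t ≤ u 0 0 * u 0 0 + u 0 1 * u 0 1 := by
    intro t ht
    have h := ((((hu 0).mul (hu 0)).add ((hu 1).mul (hu 1))).add
      (ADiff.linear (2 * δ ^ 2))).antitone (Eventually.of_forall fun s hs => by
        have h1 : δ ^ 2 ≤ u s 1 ^ 2 := by
          rw [← sq_abs (u s 1)]
          exact pow_le_pow_left₀ hδ.le (hcon s hs.le) 2
        have h2 := p2 s hs.le
        have h3 : θ₀ s = 1 - θ₂ s := by linarith [hsum s hs.le]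
        have e0 : ((θ₀ s • matA₀ + θ₂ s • matA₁).mulVec (u s)) 0 = θ₂ s * (u s 1 - u s 0) := by
          simp [matA₀, matA₁, Matrix.mulVec, dotProduct, Fin.sum_univ_two]
          ring
        have e1 : ((θ₀ s • matA₀ + θ₂ s • matA₁).mulVec (u s)) 1 =
            -u s 1 - θ₂ s * u s 0 := by
          rw [h3]
          simp [matA₀, matA₁, Matrix.mulVec, dotProduct, Fin.sum_univ_two]
          ring
        simp only [e0, e1]
        nlinarith [mul_nonneg h2 (sq_nonneg (u s 0))]) le_rfl ht
    simpa using h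
  set E := u 0 0 * u 0 0 + u 0 1 * u 0 1 with hEdef
  have hE0 : 0 ≤ E := add_nonneg (mul_self_nonneg _) (mul_self_nonneg _)
  have h := hE ((E + 1) / (2 * δ ^ 2)) (by positivity)
  rw [mul_div_cancel₀ _ (by positivity)] at h
  nlinarith [sq_nonneg (u ((E + 1) / (2 * δ ^ 2)) 0), sq_nonneg (u ((E + 1) / (2 * δ ^ 2)) 1)]

end Product

/-! ### The Barabanov norm of a product vector -/

section Barabanov

lemma isNorm_vecKron {N : (Fin 2 × Fin 2 → ℝ) → ℝ} (hN : IsNorm N) :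
    IsNorm fun w => N (vecKron ![1, 0] w) where
  eq_zero_iff v := by
    rw [hN.eq_zero_iff]
    constructor
    · intro h
      funext j
      simpa [vecKron] using congrFun h (0, j)
    · rintro rfl
      ext ⟨i, j⟩
      simp [vecKron]
  smul a v := by rw [vecKron_smul_right, hN.smul]
  triangle v w := by rw [vecKron_add_right]; exact hN.triangle _ _

lemma hasRate_vecKron {N : (Fin 2 × Fin 2 → ℝ) → ℝ} {l r : ℝ} {C : Matrix (Fin 2) (Fin 2) ℝ}
    (h : HasRate N (matX l C) r) :
    HasRate (fun w => N (vecKron ![1, 0] w)) (C - l • (1 : Matrix (Fin 2) (Fin 2) ℝ)) r := by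
  intro w
  have h0 : matA₀.mulVec ![1, 0] = 0 := by
    ext i
    fin_cases i <;> simp [matA₀]
  obtain ⟨K, hK⟩ := h (vecKron ![1, 0] w)
  refine ⟨K, fun t h0' h1 => ?_⟩
  have e : vecKron (0 : Fin 2 → ℝ) w = 0 := by
    ext ⟨i, j⟩
    simp [vecKron]
  have h2 := hK t h0' h1
  rw [matX_mulVec, h0, e, zero_add, ← vecKron_smul_right, ← vecKron_add_right] at h2
  exact h2

/-- The norm of a product vector is controlled by the norm of the second factor along the line
`u₂ = 0` fixed by `matA₀`. -/
lemma exists_vecKron_le {N : (Fin 2 × Fin 2 → ℝ) → ℝ} (hN : IsNorm N) :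
    ∃ D, 0 < D ∧ ∀ u w : Fin 2 → ℝ,
      N (vecKron u w) ≤ (|u 0| + D * |u 1|) * N (vecKron ![1, 0] w) := by
  obtain ⟨C, hC, h1⟩ := hN.exists_le
  obtain ⟨c, hc, h2⟩ := (isNorm_vecKron hN).exists_ge
  refine ⟨C / c, by positivity, fun u w => ?_⟩
  have e : vecKron u w = u 0 • vecKron ![1, 0] w + u 1 • vecKron ![0, 1] w := by
    ext ⟨i, j⟩
    fin_cases i <;> simp [vecKron]
  have h3 : ‖vecKron ![0, 1] w‖ ≤ ‖w‖ := by
    refine (pi_norm_le_iff_of_nonneg (norm_nonneg _)).2 ?_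
    rintro ⟨i, j⟩
    fin_cases i
    · simp [vecKron]
    · simpa [vecKron] using norm_le_pi_norm w j
  have h4 : N (vecKron ![0, 1] w) ≤ C / c * N (vecKron ![1, 0] w) := by
    calc N (vecKron ![0, 1] w) ≤ C * ‖w‖ := (h1 _).trans (by gcongr)
      _ = C / c * (c * ‖w‖) := by field_simp
      _ ≤ _ := by gcongr; exact h2 w
  rw [e]
  refine (hN.triangle _ _).trans ?_
  rw [hN.smul, hN.smul]
  have := mul_le_mul_of_nonneg_left h4 (abs_nonneg (u 1))
  linarith

variable {l : ℝ} (hl : l = Lambda (convexHull ℝ {matC₀, matC₁}))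
  {N : (Fin 2 × Fin 2 → ℝ) → ℝ} (hN : IsBarabanovNorm (convexHull ℝ (sysX l)) N)

include hN in
/-- Since `matA₀` kills `e₁`, the extremal norm `N` bounds the rates of the two planar generators in
the norm `w ↦ N (e₁ ⊗ w)`. -/
lemma hasRate_planar :
    HasRate (fun w => N (vecKron ![1, 0] w)) (matC₀ - l • (1 : Matrix (Fin 2) (Fin 2) ℝ))
      (Lambda (convexHull ℝ (sysX l))) ∧
    HasRate (fun w => N (vecKron ![1, 0] w)) (matC₁ - l • (1 : Matrix (Fin 2) (Fin 2) ℝ))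
      (Lambda (convexHull ℝ (sysX l))) := by
  obtain ⟨L, hL⟩ := exists_entry_bound (F := sysX l) (by unfold sysX; exact Set.toFinite _)
  exact ⟨hasRate_vecKron (hN.1.hasRate hL (subset_convexHull _ _ (by simp [sysX]))),
    hasRate_vecKron (hN.1.hasRate hL (subset_convexHull _ _ (by simp [sysX])))⟩

include hl hN

/-- The Lyapunov exponent of the product system vanishes: `rate_nonneg` and `rate_nonpos` apply to
the norm `w ↦ N (e₁ ⊗ w)`. -/
lemma lambda_eq_zero : Lambda (convexHull ℝ (sysX l)) = 0 := by
  obtain ⟨h0, h1⟩ := hasRate_planar hN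
  have hp := isNorm_vecKron hN.1.1
  refine le_antisymm ?_ (rate_nonneg hp hl h0 h1)
  set r := Lambda (convexHull ℝ (sysX l))
  obtain ⟨x, hx, hx0, hNx⟩ := hN.2 (vecKron ![1, 0] ![1, 0])
  obtain ⟨θ₀, θ₁, θ₂, u, w, m1, m2, p0, p1, p2, hsum, hu0, hw0, hu, hw, hxt⟩ :=
    exists_factors hx hx0
  obtain ⟨D, hD, hDN⟩ := exists_vecKron_le hN.1.1
  have hv : 0 < N (vecKron ![1, 0] ![1, 0]) := by
    refine lt_of_le_of_ne (hp.nonneg _) fun h => ?_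
    have := congrFun ((hp.eq_zero_iff _).1 h.symm) 0
    simp at this
  refine rate_nonpos hp hl h0 h1 m1 m2 p0 p1 p2 hsum hw
    (c := N (vecKron ![1, 0] ![1, 0]) / (1 + D)) (by positivity) fun t ht => ?_
  have h2 := hNx t ht
  rw [hxt t ht, neg_mul, Real.exp_neg, inv_mul_eq_iff_eq_mul₀ (Real.exp_pos _).ne'] at h2
  have h3 := damped_norm_le (fun s hs => add_nonneg (p0 s hs) (p1 s hs)) p2 hsum hu ht
  have h4 : ‖u 0‖ ≤ 1 := by
    rw [hu0]
    refine (pi_norm_le_iff_of_nonneg zero_le_one).2 fun i => ?_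
    fin_cases i <;> simp
  have h5 : ∀ i, |u t i| ≤ 1 := fun i => (norm_le_pi_norm (u t) i).trans (h3.trans h4)
  have h6 := hDN (u t) (w t)
  have h7 : |u t 0| + D * |u t 1| ≤ 1 + D := by nlinarith [h5 0, h5 1]
  rw [div_mul_eq_mul_div, div_le_iff₀ (by positivity)]
  have h8 := mul_le_mul_of_nonneg_right h7 (hp.nonneg (w t))
  rw [mul_comm t] at h2
  linarith

/-- Along a Barabanov trajectory the second coordinate of the damped factor comes arbitrarily
close to zero, while neither the sup norm of that factor nor the norm of the rotating factor
increases. -/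
lemma vecKron_le_of_abs_le {u v : Fin 2 → ℝ} (huv : |u 1| ≤ |u 0|) :
    N (vecKron u v) ≤ |u 0| * N (vecKron ![1, 0] v) := by
  obtain ⟨h0, h1⟩ := hasRate_planar hN
  have hp := isNorm_vecKron hN.1.1
  obtain ⟨x, hx, hx0, hNx⟩ := hN.2 (vecKron u v)
  rw [lambda_eq_zero hl hN] at h0 h1 hNx
  obtain ⟨θ₀, θ₁, θ₂, y, w, m1, m2, p0, p1, p2, hsum, hu0, hw0, hu, hw, hxt⟩ :=
    exists_factors hx hx0
  obtain ⟨D, hD, hDN⟩ := exists_vecKron_le hN.1.1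
  have hu1 : ‖u‖ ≤ |u 0| := by
    refine (pi_norm_le_iff_of_nonneg (abs_nonneg _)).2 fun i => ?_
    fin_cases i
    · exact le_rfl
    · exact huv
  have key : ∀ δ, 0 < δ → N (vecKron u v) ≤ (|u 0| + D * δ) * N (vecKron ![1, 0] v) := by
    intro δ hδ
    obtain ⟨t, ht, hyt⟩ := damped_exists_small p2 hsum hu hδ
    have h2 := hNx t ht
    rw [mul_zero, Real.exp_zero, one_mul, hxt t ht] at h2
    have h3 : |y t 0| ≤ |u 0| := by
      have h4 := damped_norm_le (fun s hs => add_nonneg (p0 s hs) (p1 s hs)) p2 hsum hu ht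
      rw [hu0] at h4
      exact (norm_le_pi_norm (y t) 0).trans (h4.trans hu1)
    have h5 := hw.rate_le hp (ADiff.linear 0) (fun s hs => by
      have h6 := HasRate.comb hp h0 h1 (p0 s hs.le) (p1 s hs.le)
        (by linarith [hsum s hs.le, p2 s hs.le])
      rwa [zero_mul] at h6) le_rfl ht
    simp only [zero_mul, neg_zero, Real.exp_zero, one_mul, hw0] at h5
    rw [← h2]
    calc N (vecKron (y t) (w t)) ≤ (|y t 0| + D * |y t 1|) * N (vecKron ![1, 0] (w t)) := hDN _ _
      _ ≤ (|u 0| + D * δ) * N (vecKron ![1, 0] v) := by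
        have := hp.nonneg (w t)
        have h6 : |y t 0| + D * |y t 1| ≤ |u 0| + D * δ := by nlinarith
        exact mul_le_mul h6 h5 this (by positivity)
  refine le_of_forall_pos_le_add fun ε hε => ?_
  have hv := hp.nonneg v
  have h := key (ε / (D * (N (vecKron ![1, 0] v) + 1))) (by positivity)
  refine h.trans ?_
  rw [add_mul]
  gcongr
  have e : D * (ε / (D * (N (vecKron ![1, 0] v) + 1))) = ε / (N (vecKron ![1, 0] v) + 1) := by
    field_simp
  rw [e, div_mul_eq_mul_div, div_le_iff₀ (by positivity)]
  nlinarith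

/-- The upper bound at `(u₁, u₂)` and at `(u₁, -u₂)` gives the lower bound by the triangle
inequality. -/
lemma vecKron_eq_of_abs_le {u₁ u₂ : ℝ} (v : Fin 2 → ℝ) (h : |u₂| ≤ |u₁|) :
    N (vecKron ![u₁, u₂] v) = N (vecKron ![u₁, 0] v) := by
  have e0 : N (vecKron ![u₁, 0] v) = |u₁| * N (vecKron ![1, 0] v) := by
    rw [← hN.1.1.smul, ← vecKron_smul_left]
    simp
  have h1 : N (vecKron ![u₁, u₂] v) ≤ |u₁| * N (vecKron ![1, 0] v) :=
    vecKron_le_of_abs_le hl hN (u := ![u₁, u₂]) (by simpa using h)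
  have h2 : N (vecKron ![u₁, -u₂] v) ≤ |u₁| * N (vecKron ![1, 0] v) :=
    vecKron_le_of_abs_le hl hN (u := ![u₁, -u₂]) (by simpa using h)
  -- `(u₁, 0)` is the midpoint of `(u₁, u₂)` and `(u₁, -u₂)`
  have h3 := hN.1.1.triangle (vecKron ![u₁, u₂] v) (vecKron ![u₁, -u₂] v)
  have e1 : vecKron ![u₁, u₂] v + vecKron ![u₁, -u₂] v = (2 : ℝ) • vecKron ![u₁, 0] v := by
    rw [← vecKron_add_left, ← vecKron_smul_left]
    congr 1
    ext i
    fin_cases i <;> simp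
    ring
  rw [e1, hN.1.1.smul_of_nonneg (by norm_num), e0] at h3
  rw [e0]
  linarith

end Barabanov

theorem stmt_19 (lam : ℝ)
    (hlam : lam = Lambda (convexHull ℝ
      ({!![0, -2; 1/2, 0], !![0, -1/2; 2, 0]} : Set (Matrix (Fin 2) (Fin 2) ℝ))))
    (A₀ A₁ B₀ B₁ : Matrix (Fin 2) (Fin 2) ℝ)
    (hA₀ : A₀ = !![0, 0; 0, -1]) (hA₁ : A₁ = !![-1, 1; -1, -1])
    (hB₀ : B₀ = !![-lam, -2; 1/2, -lam]) (hB₁ : B₁ = !![-lam, -1/2; 2, -lam])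
    (X₀ X₁ X₂ : Matrix (Fin 2 × Fin 2) (Fin 2 × Fin 2) ℝ)
    (hX₀ : X₀ = A₀ ⊗ₖ (1 : Matrix (Fin 2) (Fin 2) ℝ) + (1 : Matrix (Fin 2) (Fin 2) ℝ) ⊗ₖ B₀)
    (hX₁ : X₁ = A₀ ⊗ₖ (1 : Matrix (Fin 2) (Fin 2) ℝ) + (1 : Matrix (Fin 2) (Fin 2) ℝ) ⊗ₖ B₁)
    (hX₂ : X₂ = A₁ ⊗ₖ (1 : Matrix (Fin 2) (Fin 2) ℝ))
    (N : (Fin 2 × Fin 2 → ℝ) → ℝ)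
    (hN : IsBarabanovNorm (convexHull ℝ {X₀, X₁, X₂}) N) :
    (∀ u₁ u₂ v₁ v₂ : ℝ, |u₂| ≤ |u₁| →
        N (vecKron ![u₁, u₂] ![v₁, v₂]) = N (vecKron ![u₁, 0] ![v₁, v₂])) ∧
      ∃ w₁ w₂ : Fin 2 × Fin 2 → ℝ, w₁ ≠ w₂ ∧ N w₁ = 1 ∧ N w₂ = 1 ∧
        N (((1:ℝ)/2) • (w₁ + w₂)) = 1 := by
  have eC0 : (matC₀ - lam • (1 : Matrix (Fin 2) (Fin 2) ℝ)) = B₀ := by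
    rw [hB₀]
    ext i j
    fin_cases i <;> fin_cases j <;> simp [matC₀]
  have eC1 : (matC₁ - lam • (1 : Matrix (Fin 2) (Fin 2) ℝ)) = B₁ := by
    rw [hB₁]
    ext i j
    fin_cases i <;> fin_cases j <;> simp [matC₁]
  have hsys : ({X₀, X₁, X₂} : Set (Matrix (Fin 2 × Fin 2) (Fin 2 × Fin 2) ℝ)) = sysX lam := by
    rw [sysX, matX, matX, eC0, eC1, matA₀, matA₁, hX₀, hX₁, hX₂, hA₀, hA₁]
  rw [hsys] at hN
  have hl : lam = Lambda (convexHull ℝ {matC₀, matC₁}) := hlam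
  have hmain : ∀ u₁ u₂ v₁ v₂ : ℝ, |u₂| ≤ |u₁| →
      N (vecKron ![u₁, u₂] ![v₁, v₂]) = N (vecKron ![u₁, 0] ![v₁, v₂]) :=
    fun u₁ u₂ v₁ v₂ h => vecKron_eq_of_abs_le hl hN _ h
  refine ⟨hmain, ?_⟩
  -- the segment from `(1, 1) ⊗ e₁` to `(1, -1) ⊗ e₁` lies in a sphere of `N`
  set m := N (vecKron ![1, 0] ![1, 0]) with hm
  have hm0 : 0 < m := by
    refine lt_of_le_of_ne (hN.1.1.nonneg _) fun h => ?_
    have := congrFun ((hN.1.1.eq_zero_iff _).1 h.symm) (0, 0)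
    simp [vecKron] at this
  have h1 : N (vecKron ![1, 1] ![1, 0]) = m := hmain 1 1 1 0 le_rfl
  have h2 : N (vecKron ![1, -1] ![1, 0]) = m := hmain 1 (-1) 1 0 (by simp)
  have hs : ∀ z, N z = m → N (m⁻¹ • z) = 1 := fun z hz => by
    rw [hN.1.1.smul_of_nonneg (by positivity), hz, inv_mul_cancel₀ hm0.ne']
  refine ⟨m⁻¹ • vecKron ![1, 1] ![1, 0], m⁻¹ • vecKron ![1, -1] ![1, 0], ?_, hs _ h1, hs _ h2, ?_⟩
  · intro h
    have h3 := congrFun (smul_right_injective _ (inv_ne_zero hm0.ne') h) (1, 0)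
    simp [vecKron] at h3
    norm_num at h3
  · have e : ((1:ℝ)/2) • (m⁻¹ • vecKron ![1, 1] ![1, 0] + m⁻¹ • vecKron ![1, -1] ![1, 0]) =
        m⁻¹ • vecKron ![1, 0] ![1, 0] := by
      rw [← smul_add, ← vecKron_add_left, smul_comm, ← vecKron_smul_left]
      congr 2
      ext i
      fin_cases i <;> simp
      norm_num
    rw [e]
    exact hs _ rfl
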